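/- If the pattern Q can be self-assembled by a DTAS Θ with at most m_b = 1 black tile types, m_w = 5k − 3(w(P)+h(P)) + 14 white tile types, and m_g = 2k + 3 gray tile types, then the pattern P can be self-assembled by a DTAS T with at most m = k + 3 tile types. -/

import Mathlib

/-!
Number the inner positions of a supertile by `(i, j)` with `i, j < ℓ`; write `A`, `C₁`, `C₂` for
the tiles in the positions `(0, 0)`, `(ℓ - 1, 0)`, `(0, ℓ - 1)`. Let `f` be an assembly of `Q`.
The new system has one tile type for each supertile, whose inputs are the inputs of `A` and whose
outputs are the north glue of `C₂` and the east glue of `C₁`; the supertiles in the left column and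
the bottom row have no `A` and get inputs that are unique to their position. It assembles `P` by
construction. It has to be shown that it is directed and small.

*Directedness.* There is only one black tile type `b`, so all glues inside a black area are those
of `b`. The gadget row starts with `k` gray tiles, a white one and a further gray one, all with
the south glue of `b`. These `k + 1` gray tiles are pairwise distinct, since a repetition would
force a second white tile (`Asm.R_inj`). Together with the gray tiles of the gadget column and the
top right corner tile of a supertile they are all `2 * k + 3` gray tile types (`Asm.gray_cases`).
The top row of a supertile also has south glues of `b`, and it reads `c` gray tiles followed by a
white one, where `c` is its color. So up to the white tile it must coincide with the last `c + 1`
of the first `k + 1` tiles of the gadget row (`Asm.top_eq`). Consequently all north glues of a top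
row equal the one of `b`, all top right corners are the same tile type, and the east glue of `C₂`
determines the color of the supertile (`Asm.P_eq_of_C2`). So the bottom row of a supertile has
south glues of `b` except at its ends, and `A`
determines `C₁` (`Asm.C1_eq_of_A`) and, by reflection in the main diagonal (`Asm.tr`), also `C₂`.
As `A` is determined by its inputs, the whole new tile type is (`Asm.bigTile_det`).

*Size.* A bottom row is longer than the number of white tile types, so some type repeats in it,
and no east glue in it can be followed by a nonwhite tile above the south glue of `b`
(`Asm.bot_east`). Classifying a glue by the color of the tile that it produces next to a glue of
`b` (`Asm.rowColor`, `Asm.colColor`), the white tiles fall into seven disjoint classes: `A`, left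
columns, bottom rows, `C₂`, `C₁`, and the two white gadget tiles. The second and third classes are
at least as large as those of `C₂` and `C₁`, so `|A| + 2|C₂| + 2|C₁| + 2` is at most the number of
white tile types (`Asm.white_card`). Every color that occurs outside the left column needs a tile
`C₂` of its own, and a color whose supertiles have `n` different north outputs needs `n` of them
(`Asm.C2_card`); the same holds for `C₁`. The subpattern `p` has eight positions of different
colors, each with an `OR` to the south and to the west, so the outputs of the `OR` supertiles
combine to eight different pairs and there are at least six of these outputs. This gives
`|A| ≤ k + 4 - (w + h)` (`Asm.A_card`); the left column and the bottom row of `P` account for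
`w + h - 1` further tile types.
-/

/-- A colored Wang tile with a color and four glues (north, east, south, west). -/
structure Tile (C G : Type) where
  color : C
  north : G
  east : G
  south : G
  west : G
deriving DecidableEq

/-- A rectilinear tile assembly system: a finite set of tile types together with
an L-shaped seed, given by its north glues (bottom arm) and east glues (left arm). -/
structure RTAS (C G : Type) where
  tiles : Finset (Tile C G)
  seedN : ℕ → G
  seedE : ℕ → G

/-- A tile assignment for the `M × N` rectangle spanned by the seed:
every tile belongs to the system, west/south glues match the east/north glues of the
west/south neighbours, and the seed glues on the boundary. -/
def IsAssignment {C G : Type} (T : RTAS C G) (M N : ℕ) (f : ℕ → ℕ → Tile C G) : Prop :=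
  (∀ x < M, ∀ y < N, f x y ∈ T.tiles) ∧
  (∀ y < N, (f 0 y).west = T.seedE y) ∧
  (∀ x < M, (f x 0).south = T.seedN x) ∧
  (∀ x, x + 1 < M → ∀ y < N, (f (x + 1) y).west = (f x y).east) ∧
  (∀ x < M, ∀ y, y + 1 < N → (f x (y + 1)).south = (f x y).north)

/-- `T` self-assembles the `M × N` pattern `P` if some tile assignment realizes `P`. -/
def SelfAssembles {C G : Type} (T : RTAS C G) (M N : ℕ) (P : ℕ → ℕ → C) : Prop :=
  ∃ f, IsAssignment T M N f ∧ ∀ x < M, ∀ y < N, (f x y).color = P x y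

/-- A directed RTAS: distinct tile types differ in their south or west glue. -/
def DirectedTAS {C G : Type} (T : RTAS C G) : Prop :=
  ∀ t₁ ∈ T.tiles, ∀ t₂ ∈ T.tiles, t₁ ≠ t₂ → t₁.south ≠ t₂.south ∨ t₁.west ≠ t₂.west

/-- The set of colors occurring in the `M × N` pattern `P`. -/
def colorsOf {C : Type} [DecidableEq C] (M N : ℕ) (P : ℕ → ℕ → C) : Finset C :=
  (Finset.range M ×ˢ Finset.range N).image fun q => P q.1 q.2

/-- The named colors used in the subpatterns of the pattern `P_F` of the paper.
`uniq n` are the "unique" filler colors. -/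
inductive PColor where
  | orC | plus | minus
  | Z1 | Z2 | Z3 | Z4
  | aC | bW | bD | cW | cD | dC
  | arrW (w : Fin 2)
  | arrD (w : Fin 2)
  | upW (s : Fin 2)
  | upD (s : Fin 2)
  | gate (i : Fin 4)
  | X (i : Fin 8)
  | Y (i : Fin 8)
  | varW (v : ℕ)
  | negW (v : ℕ)
  | varAux (v : ℕ)
  | varMod (v : ℕ)
  | varModd (v : ℕ)
  | uniq (n : ℕ)
deriving DecidableEq

/-- The `16 × 2` subpattern `p`: eight `2 × 2` blocks, block `i` having colors
`Xᵢ` (bottom-left), `OR` (bottom-right, top-left) and `Yᵢ` (top-right). -/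
def pPat : ℕ → ℕ → PColor := fun x y =>
  if y = 0 then
    if x % 2 = 0 then PColor.X ⟨x / 2 % 8, Nat.mod_lt _ (by norm_num)⟩ else PColor.orC
  else
    if x % 2 = 0 then PColor.orC else PColor.Y ⟨x / 2 % 8, Nat.mod_lt _ (by norm_num)⟩

/-- The `4 × 4` subpatterns `q₁, …, q₄` (index `idx = 0, …, 3`), with west input
`w = idx / 2` and south input `s = idx % 2` feeding an `OR`-colored position. -/
def qPat (idx : Fin 4) : ℕ → ℕ → PColor := fun x y =>
  let wv : Fin 2 := ⟨idx.val / 2, by have := idx.isLt; omega⟩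
  let sv : Fin 2 := ⟨idx.val % 2, Nat.mod_lt _ (by norm_num)⟩
  match x, y with
  | 0, 0 => PColor.Z1
  | 1, 0 => PColor.Z2
  | 2, 0 => PColor.upD sv
  | 3, 0 => PColor.bD
  | 0, 1 => PColor.Z3
  | 1, 1 => PColor.aC
  | 2, 1 => PColor.upW sv
  | 3, 1 => PColor.bW
  | 0, 2 => PColor.arrD wv
  | 1, 2 => PColor.arrW wv
  | 2, 2 => PColor.orC
  | 3, 2 => if idx.val = 0 then PColor.minus else PColor.plus
  | 0, 3 => PColor.cD
  | 1, 3 => PColor.cW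
  | 2, 3 => PColor.gate idx
  | _, _ => PColor.dC

/-- The `6 × 3` subpattern `q₅`: bottom row `a ↑₀ ↑₁ ↑₀ ↑₁ b`, middle row
`→₀ OR OR OR OR +`, top row `c A B C D d`. -/
def q5Pat : ℕ → ℕ → PColor := fun x y =>
  match y, x with
  | 0, 0 => PColor.aC
  | 0, 1 => PColor.upW 0
  | 0, 2 => PColor.upW 1
  | 0, 3 => PColor.upW 0
  | 0, 4 => PColor.upW 1
  | 0, _ => PColor.bW
  | 1, 0 => PColor.arrW 0
  | 1, 5 => PColor.plus
  | 1, _ => PColor.orC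
  | 2, 0 => PColor.cW
  | 2, 1 => PColor.gate 0
  | 2, 2 => PColor.gate 1
  | 2, 3 => PColor.gate 2
  | 2, 4 => PColor.gate 3
  | _, _ => PColor.dC

/-- A literal: a variable index together with its sign (`true` = positive). -/
abbrev Lit := ℕ × Bool

/-- A clause with three literals. -/
abbrev Clause3 := Lit × Lit × Lit

/-- A boolean formula in 3-CNF over the variables `0, …, numVars - 1`. -/
structure CNF3 where
  numVars : ℕ
  clauses : List Clause3
  wf : ∀ cl ∈ clauses, cl.1.1 < numVars ∧ cl.2.1.1 < numVars ∧ cl.2.2.1 < numVars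

/-- Value of a literal under a variable assignment. -/
def litVal (f : ℕ → Bool) (l : Lit) : Bool := if l.2 then f l.1 else ! f l.1

/-- A 3-CNF formula is satisfiable if some assignment makes every clause true. -/
def CNF3.Satisfiable (F : CNF3) : Prop :=
  ∃ f : ℕ → Bool, ∀ cl ∈ F.clauses,
    (litVal f cl.1 || litVal f cl.2.1 || litVal f cl.2.2) = true

/-- The `2 × 2` subpattern `r₁(v)`. -/
def r1Pat (v : ℕ) : ℕ → ℕ → PColor := fun x y =>
  match x, y with
  | 0, 0 => PColor.Z4
  | 1, 0 => PColor.varW v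
  | 0, 1 => PColor.varAux v
  | _, _ => PColor.varMod v

/-- The `2 × 2` subpattern `r₂(v)`. -/
def r2Pat (v : ℕ) : ℕ → ℕ → PColor := fun x y =>
  match x, y with
  | 0, 0 => PColor.Z4
  | 1, 0 => PColor.negW v
  | 0, 1 => PColor.varAux v
  | _, _ => PColor.varModd v

/-- The `4 × 2` subpattern `r₃(v)`: bottom row `a v ¬v b`, top row `→₀ OR OR +`. -/
def r3Pat (v : ℕ) : ℕ → ℕ → PColor := fun x y =>
  match y, x with
  | 0, 0 => PColor.aC
  | 0, 1 => PColor.varW v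
  | 0, 2 => PColor.negW v
  | 0, _ => PColor.bW
  | 1, 0 => PColor.arrW 0
  | 1, 3 => PColor.plus
  | _, _ => PColor.orC

/-- The color of a literal. -/
def litColor (l : Lit) : PColor := if l.2 then PColor.varW l.1 else PColor.negW l.1

/-- The `5 × 2` subpattern `s(C)` for a clause `C = (c₁ ∨ c₂ ∨ c₃)`:
bottom row `a c₁ c₂ c₃ b`, top row `→₀ OR OR OR +`. -/
def sPat (cl : Clause3) : ℕ → ℕ → PColor := fun x y =>
  match y, x with
  | 0, 0 => PColor.aC
  | 0, 1 => litColor cl.1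
  | 0, 2 => litColor cl.2.1
  | 0, 3 => litColor cl.2.2
  | 0, _ => PColor.bW
  | 1, 0 => PColor.arrW 0
  | 1, 4 => PColor.plus
  | _, _ => PColor.orC

/-- A rectangular block: width, height and contents. -/
abbrev PBlock := ℕ × ℕ × (ℕ → ℕ → PColor)

/-- The list of subpatterns of `P_F`: `p`, `q₁, …, q₅`, then `r₁(v), r₂(v), r₃(v)`
for every variable `v`, then `s(C)` for every clause `C`. -/
def blocksOf (F : CNF3) : List PBlock :=
  [(16, 2, pPat), (4, 4, qPat 0), (4, 4, qPat 1), (4, 4, qPat 2), (4, 4, qPat 3),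
    (6, 3, q5Pat)]
    ++ (List.range F.numVars).flatMap
        (fun v => [(2, 2, r1Pat v), (2, 2, r2Pat v), (4, 2, r3Pat v)])
    ++ F.clauses.map (fun cl => (5, 2, sPat cl))

/-- Place the blocks side by side (starting at column `x0`, occupying rows `1, …, h`),
with one column of unique colors before each block and after the last one; all the
remaining positions carry unique colors (`uniq` of the position code). -/
def place : List PBlock → ℕ → ℕ → ℕ → PColor
  | [], _, x, y => PColor.uniq (Nat.pair x y)
  | b :: bs, x0, x, y =>
      if x0 ≤ x ∧ x < x0 + b.1 ∧ 1 ≤ y ∧ y < 1 + b.2.1 then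
        b.2.2 (x - x0) (y - 1)
      else if x < x0 + b.1 + 1 then PColor.uniq (Nat.pair x y)
      else place bs (x0 + b.1 + 1) x y

/-- The pattern `P_F` of the paper, of height `6` and width `45 + 11·|V| + 6·ℓ`. -/
def patF (F : CNF3) : ℕ → ℕ → PColor := fun x y => place (blocksOf F) 1 x y

/-- The width of the pattern `P_F`. -/
def widthF (F : CNF3) : ℕ := 45 + 11 * F.numVars + 6 * F.clauses.length

/-- The three colors black, white, gray. -/
inductive BWG where
  | black | white | gray
deriving DecidableEq

/-- The number of tile types of a given color in a tile assembly system. -/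
def countColor {C G : Type} [DecidableEq C] (T : RTAS C G) (c : C) : ℕ :=
  (T.tiles.filter (fun t => t.color = c)).card

/-- The `ℓ × ℓ` supertile portraying the color `c ∈ [k]` (with `ℓ = 5k + 8`):
white bottom row and left column; gray top row and right column except for one
white position at index `c + 1` of each (the color counters); black interior. -/
def superPat (ℓ c : ℕ) : ℕ → ℕ → BWG := fun x y =>
  if y = 0 then BWG.white
  else if x = 0 then BWG.white
  else if y = ℓ - 1 then (if x = c + 1 then BWG.white else BWG.gray)
  else if x = ℓ - 1 then (if y = c + 1 then BWG.white else BWG.gray)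
  else BWG.black

/-- The black/white/gray pattern `Q` built from the `w × h` pattern `P` with colors
in `[k]`: each position `(x, y)` of `P` is replaced by the `ℓ × ℓ` supertile
portraying `P x y` (supertiles in the bottom row/left column of `P` are
incomplete, lacking their white bottom row/left column), and three gadget rows
and three gadget columns are appended at the top and at the right. -/
def QPat (k w h : ℕ) (P : ℕ → ℕ → ℕ) : ℕ → ℕ → BWG := fun X Y =>
  let ℓ := 5 * k + 8
  if X + 1 < ℓ * w ∧ Y + 1 < ℓ * h then
    superPat ℓ (P ((X + 1) / ℓ) ((Y + 1) / ℓ)) ((X + 1) % ℓ) ((Y + 1) % ℓ)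
  else if X + 1 < ℓ * w then
    -- the three gadget rows
    if Y = ℓ * h then (if X = k then BWG.white else BWG.gray)
    else (if (X + 1) % ℓ = ℓ - 1 then BWG.gray else BWG.black)
  else if Y + 1 < ℓ * h then
    -- the three gadget columns
    if X = ℓ * w then (if Y = k then BWG.white else BWG.gray)
    else (if (Y + 1) % ℓ = ℓ - 1 then BWG.gray else BWG.black)
  else
    -- the top-right 3 × 3 corner
    if X = ℓ * w ∨ Y = ℓ * h then BWG.gray else BWG.black

/-- Width of the pattern `Q`. -/
def QW (k w : ℕ) : ℕ := (5 * k + 8) * w + 2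

/-- Height of the pattern `Q`. -/
def QH (k h : ℕ) : ℕ := (5 * k + 8) * h + 2

/-- `(P, m) ∈ ℐ` (with `m = k + 3`): `P` is, up to an identification `ρ` of its
colors with `[k] = {1, …, k}`, the pattern `P_F` of a 3-CNF formula `F`. -/
def InI (k w h : ℕ) (P : ℕ → ℕ → ℕ) : Prop :=
  ∃ (F : CNF3) (ρ : PColor → ℕ),
    w = widthF F ∧ h = 6 ∧
    Set.BijOn ρ (↑(colorsOf (widthF F) 6 (patF F))) (Set.Icc 1 k) ∧
    ∀ x < w, ∀ y < h, P x y = ρ (patF F x y)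

/-- The tile assignment of the supertile at `(x, y)` of the supertile grid,
as a partial function on inner coordinates: inner position `(i, j)` corresponds
to the global position `(x·ℓ + i - 1, y·ℓ + j - 1)`; positions with `i = 0`
(resp. `j = 0`) exist only if `x ≥ 1` (resp. `y ≥ 1`). -/
def superOpt {G : Type} (ℓ : ℕ) (f : ℕ → ℕ → Tile BWG G) (x y : ℕ) :
    ℕ → ℕ → Option (Tile BWG G) := fun i j =>
  if i < ℓ ∧ j < ℓ ∧ (1 ≤ x ∨ 1 ≤ i) ∧ (1 ≤ y ∨ 1 ≤ j) then
    some (f (x * ℓ + i - 1) (y * ℓ + j - 1))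
  else none

/-- `s(N)`: the north output of a supertile, i.e. the north glue of its tile in
position `C₂` (inner position `(0, ℓ - 1)`); defined for `x ≥ 1`. -/
def stN {G : Type} (ℓ : ℕ) (f : ℕ → ℕ → Tile BWG G) (x y : ℕ) : G :=
  (f (x * ℓ - 1) (y * ℓ + ℓ - 2)).north

/-- `s(E)`: the east output of a supertile, i.e. the east glue of its tile in
position `C₁` (inner position `(ℓ - 1, 0)`); defined for `y ≥ 1`. -/
def stE {G : Type} (ℓ : ℕ) (f : ℕ → ℕ → Tile BWG G) (x y : ℕ) : G :=
  (f (x * ℓ + ℓ - 2) (y * ℓ - 1)).east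

/-- `s(S)`: the south input of a supertile, i.e. the south glue of its tile in
position `A` (inner position `(0, 0)`); defined for `x, y ≥ 1`. -/
def stS {G : Type} (ℓ : ℕ) (f : ℕ → ℕ → Tile BWG G) (x y : ℕ) : G :=
  (f (x * ℓ - 1) (y * ℓ - 1)).south

/-- `s(W)`: the west input of a supertile, i.e. the west glue of its tile in
position `A` (inner position `(0, 0)`); defined for `x, y ≥ 1`. -/
def stW {G : Type} (ℓ : ℕ) (f : ℕ → ℕ → Tile BWG G) (x y : ℕ) : G :=
  (f (x * ℓ - 1) (y * ℓ - 1)).west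

/-- Reflection of a tile in the main diagonal. -/
def Tile.tr {C G : Type} (t : Tile C G) : Tile C G :=
  ⟨t.color, t.east, t.north, t.west, t.south⟩

theorem Tile.tr_injective {C G : Type} : Function.Injective (Tile.tr (C := C) (G := G)) := by
  rintro ⟨a, b, c, d, e⟩ ⟨a', b', c', d', e'⟩ h
  simp only [Tile.tr, Tile.mk.injEq] at h ⊢
  tauto

theorem mul_add_succ_le {ℓ w x i : ℕ} (hx : x < w) (hi : i < ℓ) : ℓ * x + i + 1 ≤ ℓ * w := by
  have : ℓ * (x + 1) ≤ ℓ * w := Nat.mul_le_mul_left _ hx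
  rw [Nat.mul_succ] at this
  omega

/-- A directed assembly `g` of the pattern `Q` from the tile types in `T`, with coordinates
shifted by one so that inner position `(i, j)` of supertile `(x, y)` is `(ℓ * x + i, ℓ * y + j)`.
Of the bounds on the tile types only the weak consequence `wht` of the bound on the
white ones is recorded. -/
structure Asm {G : Type} (k ℓ w h : ℕ) (P : ℕ → ℕ → ℕ) (T : Finset (Tile BWG G))
    (g : ℕ → ℕ → Tile BWG G) : Prop where
  hl : ℓ = 5 * k + 8
  hw : 1 ≤ w
  hh : 1 ≤ h
  det : ∀ t ∈ T, ∀ u ∈ T, t.south = u.south → t.west = u.west → t = u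
  blk : ∀ t ∈ T, ∀ u ∈ T, t.color = BWG.black → u.color = BWG.black → t = u
  gry : ∀ s : Finset (Tile BWG G), s ⊆ T → (∀ t ∈ s, t.color = BWG.gray) → s.card ≤ 2 * k + 3
  wht : ∀ s : Finset (Tile BWG G), s ⊆ T → (∀ t ∈ s, t.color = BWG.white) → s.card < 5 * k + 6
  mem : ∀ X Y, 1 ≤ X → X ≤ ℓ * w + 2 → 1 ≤ Y → Y ≤ ℓ * h + 2 → g X Y ∈ T
  hor : ∀ X Y, 1 ≤ X → X + 1 ≤ ℓ * w + 2 → 1 ≤ Y → Y ≤ ℓ * h + 2 →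
    (g (X + 1) Y).west = (g X Y).east
  ver : ∀ X Y, 1 ≤ X → X ≤ ℓ * w + 2 → 1 ≤ Y → Y + 1 ≤ ℓ * h + 2 →
    (g X (Y + 1)).south = (g X Y).north
  col : ∀ X Y, 1 ≤ X → X ≤ ℓ * w + 2 → 1 ≤ Y → Y ≤ ℓ * h + 2 →
    (g X Y).color = QPat k w h P (X - 1) (Y - 1)
  rng : ∀ x < w, ∀ y < h, 1 ≤ P x y ∧ P x y ≤ k

theorem superPat_tr (ℓ c x y : ℕ) : superPat ℓ c x y = superPat ℓ c y x := by
  simp only [superPat]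
  grind

theorem QPat_tr (k w h : ℕ) (P : ℕ → ℕ → ℕ) (X Y : ℕ) :
    QPat k w h P X Y = QPat k h w (fun x y => P y x) Y X := by
  simp only [QPat]
  rw [superPat_tr]
  grind

namespace Asm

variable {G : Type} {k ℓ w h : ℕ} {P : ℕ → ℕ → ℕ} {T : Finset (Tile BWG G)}
  {g : ℕ → ℕ → Tile BWG G}

/-- The reflection of a directed assembly of `Q` in the main diagonal. -/
theorem tr [DecidableEq G] (S : Asm k ℓ w h P T g) :
    Asm k ℓ h w (fun x y => P y x) (T.image Tile.tr) (fun X Y => (g Y X).tr) where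
  hl := S.hl
  hw := S.hh
  hh := S.hw
  det := by
    simp only [Finset.mem_image, forall_exists_index, and_imp, forall_apply_eq_imp_iff₂]
    intro t ht u hu h1 h2
    rw [S.det t ht u hu h2 h1]
  blk := by
    simp only [Finset.mem_image, forall_exists_index, and_imp, forall_apply_eq_imp_iff₂]
    intro t ht u hu h1 h2
    rw [S.blk t ht u hu h1 h2]
  gry := by
    intro s hs hc
    obtain ⟨s', hs', rfl⟩ := Finset.subset_image_iff.mp hs
    rw [Finset.card_image_of_injective _ Tile.tr_injective]
    exact S.gry s' hs' fun t ht => hc t.tr (Finset.mem_image_of_mem Tile.tr ht)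
  wht := by
    intro s hs hc
    obtain ⟨s', hs', rfl⟩ := Finset.subset_image_iff.mp hs
    rw [Finset.card_image_of_injective _ Tile.tr_injective]
    exact S.wht s' hs' fun t ht => hc t.tr (Finset.mem_image_of_mem Tile.tr ht)
  mem := fun X Y h1 h2 h3 h4 => Finset.mem_image_of_mem _ (S.mem Y X h3 h4 h1 h2)
  hor := fun X Y h1 h2 h3 h4 => S.ver Y X h3 h4 h1 h2
  ver := fun X Y h1 h2 h3 h4 => S.hor Y X h3 h4 h1 h2
  col := fun X Y h1 h2 h3 h4 => (S.col Y X h3 h4 h1 h2).trans (QPat_tr ..)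
  rng := fun x hx y hy => S.rng y hy x hx

/-! ### Colors of the assembly -/

theorem le_mul (S : Asm k ℓ w h P T g) : ℓ ≤ ℓ * w := Nat.le_mul_of_pos_right _ S.hw

theorem le_mul' (S : Asm k ℓ w h P T g) : ℓ ≤ ℓ * h := Nat.le_mul_of_pos_right _ S.hh

theorem col_super (S : Asm k ℓ w h P T g) {x y i j : ℕ} (hx : x < w) (hy : y < h)
    (hi : i < ℓ) (hj : j < ℓ) (h1 : 1 ≤ ℓ * x + i) (h2 : 1 ≤ ℓ * y + j) :
    (g (ℓ * x + i) (ℓ * y + j)).color = superPat ℓ (P x y) i j := by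
  have a1 := mul_add_succ_le hx hi
  have a2 := mul_add_succ_le hy hj
  rw [S.col _ _ h1 (by omega) h2 (by omega)]
  simp only [QPat, ← S.hl, Nat.sub_add_cancel h1, Nat.sub_add_cancel h2]
  rw [if_pos ⟨by omega, by omega⟩, Nat.mul_add_div (by omega), Nat.mul_add_div (by omega),
    Nat.div_eq_of_lt hi, Nat.div_eq_of_lt hj, Nat.mul_add_mod, Nat.mul_add_mod,
    Nat.mod_eq_of_lt hi, Nat.mod_eq_of_lt hj]
  rfl

theorem col_gadget (S : Asm k ℓ w h P T g) {x i d : ℕ} (hx : x < w) (hi : i < ℓ)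
    (h1 : 1 ≤ ℓ * x + i) (hd : d ≤ 2) :
    (g (ℓ * x + i) (ℓ * h + d)).color =
      if d = 1 then (if ℓ * x + i = k + 1 then BWG.white else BWG.gray)
      else (if i = ℓ - 1 then BWG.gray else BWG.black) := by
  have a1 := mul_add_succ_le hx hi
  have a2 := S.le_mul'
  have := S.hl
  rw [S.col _ _ h1 (by omega) (by omega) (by omega)]
  simp only [QPat, ← S.hl, Nat.sub_add_cancel h1]
  rw [if_neg (by omega), if_pos (by omega), Nat.mul_add_mod, Nat.mod_eq_of_lt hi]
  grind

/-! ### The black tile type -/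

theorem blk_eq (S : Asm k ℓ w h P T g) {t : Tile BWG G} (ht : t ∈ T) (hc : t.color = BWG.black) :
    t = g 1 1 := by
  have := S.hl; have := S.le_mul; have := S.le_mul'
  refine S.blk _ ht _ (S.mem 1 1 le_rfl (by omega) le_rfl (by omega)) hc ?_
  have := S.col_super (x := 0) (y := 0) (i := 1) (j := 1) S.hw S.hh (by omega) (by omega)
    (by omega) (by omega)
  simp only [Nat.mul_zero, Nat.zero_add] at this
  rw [this]
  simp only [superPat]
  rw [if_neg (by omega), if_neg (by omega), if_neg (by omega), if_neg (by omega)]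

theorem inner_eq (S : Asm k ℓ w h P T g) {x y i j : ℕ} (hx : x < w) (hy : y < h)
    (hi : 1 ≤ i) (hi' : i + 2 ≤ ℓ) (hj : 1 ≤ j) (hj' : j + 2 ≤ ℓ) :
    g (ℓ * x + i) (ℓ * y + j) = g 1 1 := by
  have a1 : ℓ * x + i + 1 ≤ ℓ * w := mul_add_succ_le hx (by omega)
  have a2 : ℓ * y + j + 1 ≤ ℓ * h := mul_add_succ_le hy (by omega)
  refine S.blk_eq (S.mem _ _ (by omega) (by omega) (by omega) (by omega)) ?_
  rw [S.col_super hx hy (by omega) (by omega) (by omega) (by omega)]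
  simp only [superPat]
  rw [if_neg (by omega), if_neg (by omega), if_neg (by omega), if_neg (by omega)]

theorem b_east (S : Asm k ℓ w h P T g) : (g 1 1).east = (g 1 1).west := by
  have := S.hl; have := S.le_mul; have := S.le_mul'
  have h2 := S.inner_eq (x := 0) (y := 0) (i := 2) (j := 1) S.hw S.hh (by omega) (by omega)
    (by omega) (by omega)
  simp only [Nat.mul_zero, Nat.zero_add] at h2
  rw [← S.hor 1 1 (by omega) (by omega) (by omega) (by omega), h2]

theorem b_north [DecidableEq G] (S : Asm k ℓ w h P T g) : (g 1 1).north = (g 1 1).south :=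
  S.tr.b_east

theorem eq_b (S : Asm k ℓ w h P T g) {t : Tile BWG G} (ht : t ∈ T)
    (h1 : t.south = (g 1 1).south) (h2 : t.west = (g 1 1).west) : t = g 1 1 := by
  have := S.hl; have := S.le_mul; have := S.le_mul'
  exact S.det _ ht _ (S.mem 1 1 le_rfl (by omega) le_rfl (by omega)) h1 h2

theorem b_color (S : Asm k ℓ w h P T g) : (g 1 1).color = BWG.black := by
  have := S.hl; have := S.le_mul; have := S.le_mul'
  have := S.col_super (x := 0) (y := 0) (i := 1) (j := 1) S.hw S.hh (by omega) (by omega)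
    (by omega) (by omega)
  simp only [Nat.mul_zero, Nat.zero_add] at this
  rw [this]
  simp only [superPat]
  rw [if_neg (by omega), if_neg (by omega), if_neg (by omega), if_neg (by omega)]

theorem west_ne (S : Asm k ℓ w h P T g) {t : Tile BWG G} (ht : t ∈ T)
    (h1 : t.south = (g 1 1).south) (hc : t.color ≠ BWG.black) : t.west ≠ (g 1 1).west := by
  intro h2
  rw [S.eq_b ht h1 h2] at hc
  exact hc S.b_color

/-! ### Rows of tiles above black tiles -/

/-- A row segment all of whose south glues are the black one is a run of a deterministic
automaton: the tiles following equal tiles are equal. -/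
theorem run_eq (S : Asm k ℓ w h P T g) {X Y X' Y' d : ℕ}
    (hX : 1 ≤ X) (hXd : X + d ≤ ℓ * w + 2) (hY : 1 ≤ Y) (hYh : Y ≤ ℓ * h + 2)
    (hX' : 1 ≤ X') (hXd' : X' + d ≤ ℓ * w + 2) (hY' : 1 ≤ Y') (hYh' : Y' ≤ ℓ * h + 2)
    (hs : ∀ e ≤ d, (g (X + e) Y).south = (g 1 1).south)
    (hs' : ∀ e ≤ d, (g (X' + e) Y').south = (g 1 1).south)
    (h0 : g X Y = g X' Y') : g (X + d) Y = g (X' + d) Y' := by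
  induction d with
  | zero => exact h0
  | succ d ih =>
    have := ih (by omega) (by omega) (fun e he => hs e (by omega)) (fun e he => hs' e (by omega))
    refine S.det _ (S.mem _ _ (by omega) (by omega) (by omega) (by omega)) _
      (S.mem _ _ (by omega) (by omega) (by omega) (by omega)) ?_ ?_
    · rw [hs _ le_rfl, hs' _ le_rfl]
    · rw [← Nat.add_assoc, ← Nat.add_assoc, S.hor _ _ (by omega) (by omega) (by omega) (by omega),
        S.hor _ _ (by omega) (by omega) (by omega) (by omega), this]

/-! ### The gadget row -/

theorem R_mem (S : Asm k ℓ w h P T g) {i : ℕ} (hi : i + 3 ≤ ℓ) : g (i + 1) (ℓ * h + 1) ∈ T := by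
  have := S.le_mul; have := S.le_mul'
  exact S.mem _ _ (by omega) (by omega) (by omega) (by omega)

theorem R_color (S : Asm k ℓ w h P T g) {i : ℕ} (hi : i + 3 ≤ ℓ) :
    (g (i + 1) (ℓ * h + 1)).color = if i = k then BWG.white else BWG.gray := by
  have := S.col_gadget (x := 0) (i := i + 1) (d := 1) S.hw (by omega) (by omega) (by omega)
  simpa using this

theorem R_ne_black (S : Asm k ℓ w h P T g) {i : ℕ} (hi : i + 3 ≤ ℓ) :
    (g (i + 1) (ℓ * h + 1)).color ≠ BWG.black := by
  rw [S.R_color hi]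
  split <;> simp

theorem R_south [DecidableEq G] (S : Asm k ℓ w h P T g) {i : ℕ} (hi : i + 3 ≤ ℓ) :
    (g (i + 1) (ℓ * h + 1)).south = (g 1 1).south := by
  have := S.le_mul; have := S.le_mul'
  have hc := S.col_gadget (x := 0) (i := i + 1) (d := 0) S.hw (by omega) (by omega) (by omega)
  rw [if_neg (by omega), if_neg (by omega)] at hc
  simp only [Nat.mul_zero, Nat.zero_add, Nat.add_zero] at hc
  rw [S.ver _ _ (by omega) (by omega) (by omega) (by omega),
    S.blk_eq (S.mem _ _ (by omega) (by omega) (by omega) (by omega)) hc, S.b_north]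

theorem R_north (S : Asm k ℓ w h P T g) {i : ℕ} (hi : i + 3 ≤ ℓ) :
    (g (i + 1) (ℓ * h + 1)).north = (g 1 1).south := by
  have := S.le_mul; have := S.le_mul'
  have hc := S.col_gadget (x := 0) (i := i + 1) (d := 2) S.hw (by omega) (by omega) (by omega)
  rw [if_neg (by omega), if_neg (by omega)] at hc
  simp only [Nat.mul_zero, Nat.zero_add] at hc
  rw [← S.ver _ _ (by omega) (by omega) (by omega) (by omega),
    S.blk_eq (S.mem _ _ (by omega) (by omega) (by omega) (by omega)) hc]

theorem R_hor (S : Asm k ℓ w h P T g) {i : ℕ} (hi : i + 4 ≤ ℓ) :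
    (g (i + 1 + 1) (ℓ * h + 1)).west = (g (i + 1) (ℓ * h + 1)).east := by
  have := S.le_mul; have := S.le_mul'
  exact S.hor _ _ (by omega) (by omega) (by omega) (by omega)

theorem R_east_ne [DecidableEq G] (S : Asm k ℓ w h P T g) {i : ℕ} (hi : i + 4 ≤ ℓ) :
    (g (i + 1) (ℓ * h + 1)).east ≠ (g 1 1).west := by
  rw [← S.R_hor hi]
  exact S.west_ne (S.R_mem (by omega)) (S.R_south (by omega)) (S.R_ne_black (by omega))

/-- Before its white tile the gadget row cannot show a tile that it shows again soon
afterwards, since it would then show a second white tile. -/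
theorem R_ne [DecidableEq G] (S : Asm k ℓ w h P T g) {i j : ℕ} (hi : i < k) (hij : i < j)
    (hj : j ≤ k + 1) : g (i + 1) (ℓ * h + 1) ≠ g (j + 1) (ℓ * h + 1) := by
  intro he
  have := S.hl; have := S.le_mul; have := S.le_mul'
  have key := S.run_eq (X := i + 1) (X' := j + 1) (Y := ℓ * h + 1) (Y' := ℓ * h + 1) (d := k - i)
    (by omega) (by omega) (by omega) (by omega) (by omega) (by omega) (by omega) (by omega)
    (fun e he => by rw [Nat.add_right_comm]; exact S.R_south (by omega))
    (fun e he => by rw [Nat.add_right_comm]; exact S.R_south (by omega)) he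
  have := congrArg Tile.color key
  rw [Nat.add_right_comm, S.R_color (by omega), Nat.add_right_comm, S.R_color (by omega),
    if_pos (by omega), if_neg (by omega)] at this
  exact absurd this (by simp)

/-- The gray tiles at the start of the gadget row (all indices up to `k + 1` except the white
tile's index `k`) are pairwise distinct. -/
theorem R_inj [DecidableEq G] (S : Asm k ℓ w h P T g) {i j : ℕ} (hi : i < k ∨ i = k + 1)
    (hj : j < k ∨ j = k + 1) (he : g (i + 1) (ℓ * h + 1) = g (j + 1) (ℓ * h + 1)) : i = j := by
  rcases lt_trichotomy i j with h1 | h1 | h1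
  · exact absurd he (S.R_ne (by omega) h1 (by omega))
  · exact h1
  · exact absurd he.symm (S.R_ne (by omega) h1 (by omega))

/-! ### The gray tile types -/

theorem corner_pos (S : Asm k ℓ w h P T g) : ℓ * w - 1 = ℓ * (w - 1) + (ℓ - 1) := by
  have := S.hl; have := S.hw
  obtain ⟨v, rfl⟩ : ∃ v, w = v + 1 := ⟨w - 1, by omega⟩
  rw [Nat.mul_succ, Nat.add_sub_cancel]
  omega

theorem corner_mem (S : Asm k ℓ w h P T g) : g (ℓ * w - 1) (ℓ * h - 1) ∈ T := by
  have := S.hl; have := S.le_mul; have := S.le_mul'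
  exact S.mem _ _ (by omega) (by omega) (by omega) (by omega)

theorem D_color (S : Asm k ℓ w h P T g) {x y : ℕ} (hx : x < w) (hy : y < h) :
    (g (ℓ * x + (ℓ - 1)) (ℓ * y + (ℓ - 1))).color = BWG.gray := by
  have := S.hl; have := S.rng x hx y hy
  rw [S.col_super hx hy (by omega) (by omega) (by omega) (by omega)]
  simp only [superPat]
  simp only [if_true]
  rw [if_neg (by omega), if_neg (by omega), if_neg (by omega)]

theorem corner_color [DecidableEq G] (S : Asm k ℓ w h P T g) :
    (g (ℓ * w - 1) (ℓ * h - 1)).color = BWG.gray := by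
  have := S.hw; have := S.hh
  have h1 := S.corner_pos
  have h2 := S.tr.corner_pos
  rw [h1, h2]
  exact S.D_color (by omega) (by omega)

/-- Above the top right supertile, the gadget tile to the right of a black tile is gray. -/
theorem corner_gadget [DecidableEq G] (S : Asm k ℓ w h P T g) :
    ∃ u ∈ T, u.color = BWG.gray ∧ u.west = (g 1 1).west ∧
      u.south = (g (ℓ * w - 1) (ℓ * h - 1)).north := by
  have := S.hl; have := S.le_mul; have := S.le_mul'; have := S.hw
  have h1 := S.corner_pos
  refine ⟨g (ℓ * w - 1) (ℓ * h), S.mem _ _ (by omega) (by omega) (by omega) (by omega), ?_, ?_, ?_⟩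
  · have := S.col_gadget (x := w - 1) (i := ℓ - 1) (d := 0) (by omega) (by omega) (by omega)
      (by omega)
    rw [h1]
    simpa using this
  · have hc := S.col_gadget (x := w - 1) (i := ℓ - 2) (d := 0) (by omega) (by omega) (by omega)
      (by omega)
    rw [if_neg (by omega), if_neg (by omega)] at hc
    have h3 : ℓ * w - 1 = ℓ * (w - 1) + (ℓ - 2) + 1 := by omega
    rw [h3, S.hor _ _ (by omega) (by omega) (by omega) (by omega)]
    rw [Nat.add_zero] at hc
    rw [S.blk_eq (S.mem _ _ (by omega) (by omega) (by omega) (by omega)) hc, S.b_east]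
  · rw [← S.ver _ _ (by omega) (by omega) (by omega) (by omega)]
    congr 2
    omega

theorem corner_north_ne [DecidableEq G] (S : Asm k ℓ w h P T g) :
    (g (ℓ * w - 1) (ℓ * h - 1)).north ≠ (g 1 1).south := by
  obtain ⟨u, hu, hc, hw', hs⟩ := S.corner_gadget
  intro he
  exact S.west_ne hu (hs.trans he) (by simp [hc]) hw'

/-- The gray tile types are exhausted by the `k + 1` counter types of the gadget row, the
`k + 1` counter types of the gadget column, and the corner type of the top right supertile. -/
theorem gray_cases [DecidableEq G] (S : Asm k ℓ w h P T g) {t : Tile BWG G} (ht : t ∈ T)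
    (hc : t.color = BWG.gray) :
    (∃ i, (i < k ∨ i = k + 1) ∧ t = g (i + 1) (ℓ * h + 1)) ∨
    (∃ j, (j < k ∨ j = k + 1) ∧ t = g (ℓ * w + 1) (j + 1)) ∨
    t = g (ℓ * w - 1) (ℓ * h - 1) := by
  have := S.hl
  let I : Finset ℕ := insert (k + 1) (Finset.range k)
  have hI : ∀ i, i ∈ I ↔ (i < k ∨ i = k + 1) := by
    intro i; simp [I, or_comm]
  have hIc : I.card = k + 1 := by simp [I]
  let HG := I.image fun i => g (i + 1) (ℓ * h + 1)
  let VG := I.image fun j => g (ℓ * w + 1) (j + 1)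
  have hHc : HG.card = k + 1 := by
    rw [← hIc]
    refine Finset.card_image_of_injOn fun i hi j hj he => ?_
    exact S.R_inj ((hI i).1 hi) ((hI j).1 hj) he
  have hVc : VG.card = k + 1 := by
    rw [← hIc]
    refine Finset.card_image_of_injOn fun i hi j hj he => ?_
    exact S.tr.R_inj ((hI i).1 hi) ((hI j).1 hj) (congrArg Tile.tr he)
  have hdis : Disjoint HG VG := by
    rw [Finset.disjoint_left]
    intro u hu hu'
    obtain ⟨i, hi, rfl⟩ := Finset.mem_image.1 hu
    obtain ⟨j, hj, he⟩ := Finset.mem_image.1 hu'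
    have hi := (hI i).1 hi
    have hj := (hI j).1 hj
    refine S.west_ne (S.R_mem (i := i) (by omega)) (S.R_south (by omega))
      (S.R_ne_black (by omega)) ?_
    rw [← he]
    exact S.tr.R_south (by omega)
  have hD : g (ℓ * w - 1) (ℓ * h - 1) ∉ HG ∪ VG := by
    rw [Finset.mem_union]
    rintro (hu | hu)
    · obtain ⟨i, hi, he⟩ := Finset.mem_image.1 hu
      have hi := (hI i).1 hi
      apply S.corner_north_ne
      rw [← he]
      exact S.R_north (by omega)
    · obtain ⟨i, hi, he⟩ := Finset.mem_image.1 hu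
      have hi := (hI i).1 hi
      apply S.tr.corner_north_ne
      change (g (ℓ * w - 1) (ℓ * h - 1)).east = _
      rw [← he]
      exact S.tr.R_north (by omega)
  by_contra hcon
  push Not at hcon
  have htn : t ∉ insert (g (ℓ * w - 1) (ℓ * h - 1)) (HG ∪ VG) := by
    simp only [Finset.mem_insert, Finset.mem_union, HG, VG, Finset.mem_image, hI]
    rintro (h1 | ⟨i, hi, h1⟩ | ⟨i, hi, h1⟩)
    · exact hcon.2.2 h1
    · exact hcon.1 i hi h1.symm
    · exact hcon.2.1 i hi h1.symm
  have hcard := S.gry (insert t (insert (g (ℓ * w - 1) (ℓ * h - 1)) (HG ∪ VG))) ?_ ?_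
  · rw [Finset.card_insert_of_notMem htn, Finset.card_insert_of_notMem hD,
      Finset.card_union_of_disjoint hdis, hHc, hVc] at hcard
    omega
  · intro u hu
    simp only [Finset.mem_insert, Finset.mem_union, HG, VG, Finset.mem_image, hI] at hu
    rcases hu with rfl | rfl | ⟨i, hi, rfl⟩ | ⟨i, hi, rfl⟩
    · exact ht
    · exact S.corner_mem
    · exact S.R_mem (by omega)
    · obtain ⟨u, hu, he⟩ := Finset.mem_image.1 (S.tr.R_mem (i := i) (by omega))
      rwa [← Tile.tr_injective he]
  · intro u hu
    simp only [Finset.mem_insert, Finset.mem_union, HG, VG, Finset.mem_image, hI] at hu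
    rcases hu with rfl | rfl | ⟨i, hi, rfl⟩ | ⟨i, hi, rfl⟩
    · exact hc
    · exact S.corner_color
    · rw [S.R_color (by omega), if_neg (by omega)]
    · refine (S.tr.R_color (i := i) (by omega)).trans ?_
      rw [if_neg (by omega)]

/-- A gray tile with the west glue of the black tile is a tile of the gadget column or the corner
tile; above it there has to be a nonblack tile with the same west glue. -/
theorem gray_north_ne [DecidableEq G] (S : Asm k ℓ w h P T g) {t : Tile BWG G} (ht : t ∈ T)
    (hc : t.color = BWG.gray) (hw' : t.west = (g 1 1).west) : t.north ≠ (g 1 1).south := by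
  have := S.hl
  rcases S.gray_cases ht hc with ⟨i, hi, rfl⟩ | ⟨j, hj, rfl⟩ | rfl
  · exact absurd hw' (S.west_ne ht (S.R_south (by omega)) (S.R_ne_black (by omega)))
  · exact S.tr.R_east_ne (by omega)
  · exact S.corner_north_ne

theorem D_mem (S : Asm k ℓ w h P T g) {x y : ℕ} (hx : x < w) (hy : y < h) :
    g (ℓ * x + (ℓ - 1)) (ℓ * y + (ℓ - 1)) ∈ T := by
  have := S.hl
  have a1 : ℓ * x + (ℓ - 1) + 1 ≤ ℓ * w := mul_add_succ_le hx (by omega)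
  have a2 : ℓ * y + (ℓ - 1) + 1 ≤ ℓ * h := mul_add_succ_le hy (by omega)
  exact S.mem _ _ (by omega) (by omega) (by omega) (by omega)

theorem D_south_ne [DecidableEq G] (S : Asm k ℓ w h P T g) {x y : ℕ} (hx : x < w) (hy : y < h) :
    (g (ℓ * x + (ℓ - 1)) (ℓ * y + (ℓ - 1))).south ≠ (g 1 1).south := by
  have := S.hl; have := S.rng x hx y hy
  have a1 : ℓ * x + (ℓ - 1) + 1 ≤ ℓ * w := mul_add_succ_le hx (by omega)
  have a2 : ℓ * y + (ℓ - 1) + 1 ≤ ℓ * h := mul_add_succ_le hy (by omega)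
  have e1 : ℓ * y + (ℓ - 1) = ℓ * y + (ℓ - 2) + 1 := by omega
  rw [e1, S.ver _ _ (by omega) (by omega) (by omega) (by omega)]
  refine S.gray_north_ne (S.mem _ _ (by omega) (by omega) (by omega) (by omega)) ?_ ?_
  · rw [S.col_super hx hy (by omega) (by omega) (by omega) (by omega)]
    simp only [superPat]
    rw [if_neg (by omega), if_neg (by omega), if_neg (by omega), if_pos trivial, if_neg (by omega)]
  · have e2 : ℓ * x + (ℓ - 1) = ℓ * x + (ℓ - 2) + 1 := by omega
    rw [e2, S.hor _ _ (by omega) (by omega) (by omega) (by omega),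
      S.inner_eq hx hy (by omega) (by omega) (by omega) (by omega), S.b_east]

theorem gray_row [DecidableEq G] (S : Asm k ℓ w h P T g) {t : Tile BWG G} (ht : t ∈ T)
    (hc : t.color = BWG.gray) (hs : t.south = (g 1 1).south) :
    ∃ i, (i < k ∨ i = k + 1) ∧ t = g (i + 1) (ℓ * h + 1) := by
  have := S.hl; have := S.hw; have := S.hh
  rcases S.gray_cases ht hc with hi | ⟨j, hj, rfl⟩ | rfl
  · exact hi
  · exact absurd (S.tr.R_south (by omega)) (S.west_ne ht hs (by simp [hc]))
  · rw [S.corner_pos, S.tr.corner_pos] at hs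
    exact absurd hs (S.D_south_ne (by omega) (by omega))

/-- All supertiles have the same top right corner tile. -/
theorem D_eq [DecidableEq G] (S : Asm k ℓ w h P T g) {x y : ℕ} (hx : x < w) (hy : y < h) :
    g (ℓ * x + (ℓ - 1)) (ℓ * y + (ℓ - 1)) = g (ℓ * w - 1) (ℓ * h - 1) := by
  have := S.hl
  rcases S.gray_cases (S.D_mem hx hy) (S.D_color hx hy) with ⟨i, hi, he⟩ | ⟨j, hj, he⟩ | he
  · refine absurd ?_ (S.D_south_ne hx hy)
    rw [he]
    exact S.R_south (by omega)
  · refine absurd ?_ (S.tr.D_south_ne hy hx)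
    change (g (ℓ * x + (ℓ - 1)) (ℓ * y + (ℓ - 1))).west = _
    rw [he]
    exact S.tr.R_south (by omega)
  · exact he

/-! ### Top rows of supertiles: the color counters -/

theorem top_south [DecidableEq G] (S : Asm k ℓ w h P T g) {x y i : ℕ} (hx : x < w) (hy : y < h)
    (hi : 1 ≤ i) (hi' : i + 2 ≤ ℓ) :
    (g (ℓ * x + i) (ℓ * y + (ℓ - 1))).south = (g 1 1).south := by
  have := S.hl
  have a1 : ℓ * x + i + 1 ≤ ℓ * w := mul_add_succ_le hx (by omega)
  have a2 : ℓ * y + (ℓ - 1) + 1 ≤ ℓ * h := mul_add_succ_le hy (by omega)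
  have e1 : ℓ * y + (ℓ - 1) = ℓ * y + (ℓ - 2) + 1 := by omega
  rw [e1, S.ver _ _ (by omega) (by omega) (by omega) (by omega),
    S.inner_eq hx hy (by omega) (by omega) (by omega) (by omega), S.b_north]

theorem top_color (S : Asm k ℓ w h P T g) {x y i : ℕ} (hx : x < w) (hy : y < h)
    (hi : 1 ≤ i) (hi' : i + 2 ≤ ℓ) :
    (g (ℓ * x + i) (ℓ * y + (ℓ - 1))).color =
      if i = P x y + 1 then BWG.white else BWG.gray := by
  have := S.hl
  rw [S.col_super hx hy (by omega) (by omega) (by omega) (by omega)]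
  simp only [superPat]
  rw [if_neg (by omega), if_neg (by omega), if_pos trivial]

/-- The top row of a supertile, up to its white tile, is a final part of the segment of the
gadget row up to the white tile there. -/
theorem top_eq [DecidableEq G] (S : Asm k ℓ w h P T g) {x y d : ℕ} (hx : x < w) (hy : y < h)
    (hd : d ≤ P x y) :
    g (ℓ * x + 1 + d) (ℓ * y + (ℓ - 1)) = g (k - P x y + d + 1) (ℓ * h + 1) := by
  have := S.hl; have := S.le_mul; have := S.le_mul'
  obtain ⟨c1, c2⟩ := S.rng x hx y hy
  have a1 : ℓ * x + (ℓ - 1) + 1 ≤ ℓ * w := mul_add_succ_le hx (by omega)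
  have a2 : ℓ * y + (ℓ - 1) + 1 ≤ ℓ * h := mul_add_succ_le hy (by omega)
  have hc : (g (ℓ * x + 1) (ℓ * y + (ℓ - 1))).color = BWG.gray := by
    rw [S.top_color hx hy (by omega) (by omega), if_neg (by omega)]
  obtain ⟨j, hj, he⟩ := S.gray_row (S.mem _ _ (by omega) (by omega) (by omega) (by omega)) hc
    (S.top_south hx hy (by omega) (by omega))
  have run : ∀ d, d ≤ k + 1 →
      g (ℓ * x + 1 + d) (ℓ * y + (ℓ - 1)) = g (j + 1 + d) (ℓ * h + 1) := by
    intro d hd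
    refine S.run_eq (by omega) (by omega) (by omega) (by omega) (by omega) (by omega) (by omega)
      (by omega) ?_ ?_ he
    · intro e he
      rw [Nat.add_assoc]
      exact S.top_south hx hy (by omega) (by omega)
    · intro e he
      rw [Nat.add_right_comm]
      exact S.R_south (by omega)
  have cols : ∀ d, d ≤ k + 1 → (if 1 + d = P x y + 1 then BWG.white else BWG.gray) =
      if j + d = k then BWG.white else BWG.gray := by
    intro d hd
    have := congrArg Tile.color (run d hd)
    rwa [Nat.add_assoc, S.top_color hx hy (by omega) (by omega), Nat.add_right_comm,
      S.R_color (by omega)] at this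
  have hjc : j = k - P x y := by
    have := cols (P x y) (by omega)
    rw [if_pos (by omega)] at this
    split at this
    · omega
    · simp at this
  rw [run d (by omega), hjc, Nat.add_right_comm]

theorem top_north [DecidableEq G] (S : Asm k ℓ w h P T g) {x y i : ℕ} (hx : x < w) (hy : y < h)
    (hi : 1 ≤ i) (hi' : i + 2 ≤ ℓ) :
    (g (ℓ * x + i) (ℓ * y + (ℓ - 1))).north = (g 1 1).south := by
  have := S.hl
  obtain ⟨c1, c2⟩ := S.rng x hx y hy
  have a1 : ℓ * x + (ℓ - 1) + 1 ≤ ℓ * w := mul_add_succ_le hx (by omega)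
  have a2 : ℓ * y + (ℓ - 1) + 1 ≤ ℓ * h := mul_add_succ_le hy (by omega)
  by_cases hic : i = P x y + 1
  · have := S.top_eq hx hy (d := P x y) le_rfl
    rw [hic, Nat.add_comm _ 1, ← Nat.add_assoc, this]
    exact S.R_north (by omega)
  · obtain ⟨j, hj, he⟩ := S.gray_row (S.mem _ _ (by omega) (by omega) (by omega) (by omega))
      (by rw [S.top_color hx hy hi hi', if_neg hic]) (S.top_south hx hy hi hi')
    rw [he]
    exact S.R_north (by omega)

theorem C2_east [DecidableEq G] (S : Asm k ℓ w h P T g) {x y : ℕ} (hx0 : 1 ≤ x) (hx : x < w)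
    (hy : y < h) : (g (ℓ * x) (ℓ * y + (ℓ - 1))).east =
      (g (k - P x y + 1) (ℓ * h + 1)).west := by
  have := S.hl; have := S.rng x hx y hy
  have a0 : ℓ ≤ ℓ * x := Nat.le_mul_of_pos_right _ hx0
  have a1 : ℓ * x + (ℓ - 1) + 1 ≤ ℓ * w := mul_add_succ_le hx (by omega)
  have a2 : ℓ * y + (ℓ - 1) + 1 ≤ ℓ * h := mul_add_succ_le hy (by omega)
  have := S.top_eq hx hy (d := 0) (by omega)
  rw [← S.hor _ _ (by omega) (by omega) (by omega) (by omega)]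
  rw [Nat.add_zero, Nat.add_zero] at this
  rw [this]

theorem C2_color (S : Asm k ℓ w h P T g) {x y : ℕ} (hx0 : 1 ≤ x) (hx : x < w)
    (hy : y < h) : (g (ℓ * x) (ℓ * y + (ℓ - 1))).color = BWG.white := by
  have := S.hl
  have a0 : ℓ ≤ ℓ * x := Nat.le_mul_of_pos_right _ hx0
  have := S.col_super hx hy (i := 0) (j := ℓ - 1) (by omega) (by omega) (by omega) (by omega)
  rw [Nat.add_zero] at this
  rw [this]
  simp [superPat]

theorem C2_mem (S : Asm k ℓ w h P T g) {x y : ℕ} (hx0 : 1 ≤ x) (hx : x < w)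
    (hy : y < h) : g (ℓ * x) (ℓ * y + (ℓ - 1)) ∈ T := by
  have := S.hl
  have a0 : ℓ ≤ ℓ * x := Nat.le_mul_of_pos_right _ hx0
  have a1 : ℓ * x + (ℓ - 1) + 1 ≤ ℓ * w := mul_add_succ_le hx (by omega)
  have a2 : ℓ * y + (ℓ - 1) + 1 ≤ ℓ * h := mul_add_succ_le hy (by omega)
  exact S.mem _ _ (by omega) (by omega) (by omega) (by omega)

/-- The east glue of the tile in position `C₂` determines the color of the supertile. -/
theorem P_eq_of_C2 [DecidableEq G] (S : Asm k ℓ w h P T g) {x y x' y' : ℕ} (hx0 : 1 ≤ x)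
    (hx : x < w) (hy : y < h) (hx0' : 1 ≤ x') (hx' : x' < w) (hy' : y' < h)
    (he : g (ℓ * x) (ℓ * y + (ℓ - 1)) = g (ℓ * x') (ℓ * y' + (ℓ - 1))) : P x y = P x' y' := by
  have := S.hl; have := S.rng x hx y hy; have := S.rng x' hx' y' hy'
  have h1 := congrArg Tile.east he
  rw [S.C2_east hx0 hx hy, S.C2_east hx0' hx' hy'] at h1
  have h2 := S.det _ (S.R_mem (i := k - P x y) (by omega)) _
    (S.R_mem (i := k - P x' y') (by omega))
    (by rw [S.R_south (by omega), S.R_south (by omega)]) h1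
  have := S.R_inj (by omega) (by omega) h2
  omega

/-! ### Bottom rows of supertiles -/

theorem bot_mem (S : Asm k ℓ w h P T g) {x y i : ℕ} (hx : x < w) (hy0 : 1 ≤ y) (hy : y < h)
    (hi : i < ℓ) (hxi : 1 ≤ x ∨ 1 ≤ i) : g (ℓ * x + i) (ℓ * y) ∈ T := by
  have := S.hl
  have a0 : ℓ ≤ ℓ * y := Nat.le_mul_of_pos_right _ hy0
  have a1 : ℓ * x + i + 1 ≤ ℓ * w := mul_add_succ_le hx (by omega)
  have a2 : ℓ * y + 0 + 1 ≤ ℓ * h := mul_add_succ_le (ℓ := ℓ) (i := 0) hy (by omega)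
  have a3 : 1 ≤ ℓ * x + i := by
    rcases hxi with hx0 | hi
    · have : ℓ ≤ ℓ * x := Nat.le_mul_of_pos_right _ hx0
      omega
    · omega
  exact S.mem _ _ (by omega) (by omega) (by omega) (by omega)

theorem bot_hor (S : Asm k ℓ w h P T g) {x y i : ℕ} (hx : x < w) (hy0 : 1 ≤ y) (hy : y < h)
    (hi : i + 2 ≤ ℓ) (hxi : 1 ≤ x ∨ 1 ≤ i) :
    (g (ℓ * x + (i + 1)) (ℓ * y)).west = (g (ℓ * x + i) (ℓ * y)).east := by
  have := S.hl
  have a0 : ℓ ≤ ℓ * y := Nat.le_mul_of_pos_right _ hy0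
  have a1 : ℓ * x + (i + 1) + 1 ≤ ℓ * w := mul_add_succ_le hx (by omega)
  have a2 : ℓ * y + 0 + 1 ≤ ℓ * h := mul_add_succ_le (ℓ := ℓ) (i := 0) hy (by omega)
  have a3 : 1 ≤ ℓ * x + i := by
    rcases hxi with hx0 | hi
    · have : ℓ ≤ ℓ * x := Nat.le_mul_of_pos_right _ hx0
      omega
    · omega
  exact S.hor (ℓ * x + i) (ℓ * y) (by omega) (by omega) (by omega) (by omega)

theorem bot_color (S : Asm k ℓ w h P T g) {x y i : ℕ} (hx : x < w) (hy0 : 1 ≤ y) (hy : y < h)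
    (hi : i < ℓ) (hxi : 1 ≤ x ∨ 1 ≤ i) : (g (ℓ * x + i) (ℓ * y)).color = BWG.white := by
  have := S.hl
  have a0 : ℓ ≤ ℓ * y := Nat.le_mul_of_pos_right _ hy0
  have a3 : 1 ≤ ℓ * x + i := by
    rcases hxi with hx0 | hi
    · have : ℓ ≤ ℓ * x := Nat.le_mul_of_pos_right _ hx0
      omega
    · omega
  have := S.col_super hx hy (i := i) (j := 0) (by omega) (by omega) (by omega) (by omega)
  rw [Nat.add_zero] at this
  rw [this]
  simp [superPat]

/-- The row below the bottom row of a supertile is the top row of the supertile below it. -/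
theorem bot_south_eq (S : Asm k ℓ w h P T g) {x y i : ℕ} (hx : x < w) (hy : y + 1 < h)
    (hi : 1 ≤ i) (hi' : i < ℓ) :
    (g (ℓ * x + i) (ℓ * (y + 1))).south = (g (ℓ * x + i) (ℓ * y + (ℓ - 1))).north := by
  have := S.hl
  have a1 : ℓ * x + i + 1 ≤ ℓ * w := mul_add_succ_le hx (by omega)
  have a2 : ℓ * (y + 1) + 0 + 1 ≤ ℓ * h := mul_add_succ_le (ℓ := ℓ) (i := 0) hy (by omega)
  have e1 : ℓ * (y + 1) = ℓ * y + (ℓ - 1) + 1 := by rw [Nat.mul_succ]; omega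
  rw [e1] at a2 ⊢
  exact S.ver _ _ (by omega) (by omega) (by omega) (by omega)

theorem bot_south [DecidableEq G] (S : Asm k ℓ w h P T g) {x y i : ℕ} (hx : x < w) (hy0 : 1 ≤ y)
    (hy : y < h) (hi : 1 ≤ i) (hi' : i + 2 ≤ ℓ) :
    (g (ℓ * x + i) (ℓ * y)).south = (g 1 1).south := by
  obtain ⟨y, rfl⟩ : ∃ z, y = z + 1 := ⟨y - 1, by omega⟩
  rw [S.bot_south_eq hx hy hi (by omega), S.top_north hx (by omega) hi hi']

theorem bot_north (S : Asm k ℓ w h P T g) {x y i : ℕ} (hx : x < w) (hy0 : 1 ≤ y)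
    (hy : y < h) (hi : 1 ≤ i) (hi' : i + 2 ≤ ℓ) :
    (g (ℓ * x + i) (ℓ * y)).north = (g 1 1).south := by
  have := S.hl
  have a0 : ℓ ≤ ℓ * y := Nat.le_mul_of_pos_right _ hy0
  have a1 : ℓ * x + i + 1 ≤ ℓ * w := mul_add_succ_le hx (by omega)
  have a2 : ℓ * y + 1 + 1 ≤ ℓ * h := mul_add_succ_le hy (by omega)
  rw [← S.ver _ _ (by omega) (by omega) (by omega) (by omega),
    S.inner_eq hx hy hi hi' (by omega) (by omega)]

theorem bot_run [DecidableEq G] (S : Asm k ℓ w h P T g) {x y x' y' i i' d : ℕ} (hx : x < w)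
    (hy0 : 1 ≤ y) (hy : y < h) (hx' : x' < w) (hy0' : 1 ≤ y') (hy' : y' < h)
    (hi : 1 ≤ i) (hid : i + d + 2 ≤ ℓ) (hi' : 1 ≤ i') (hid' : i' + d + 2 ≤ ℓ)
    (he : g (ℓ * x + i) (ℓ * y) = g (ℓ * x' + i') (ℓ * y')) :
    g (ℓ * x + (i + d)) (ℓ * y) = g (ℓ * x' + (i' + d)) (ℓ * y') := by
  have := S.hl
  have a0 : ℓ ≤ ℓ * y := Nat.le_mul_of_pos_right _ hy0
  have a0' : ℓ ≤ ℓ * y' := Nat.le_mul_of_pos_right _ hy0'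
  have a1 : ℓ * x + (i + d) + 1 ≤ ℓ * w := mul_add_succ_le hx (by omega)
  have a1' : ℓ * x' + (i' + d) + 1 ≤ ℓ * w := mul_add_succ_le hx' (by omega)
  have a2 : ℓ * y + 0 + 1 ≤ ℓ * h := mul_add_succ_le (ℓ := ℓ) (i := 0) hy (by omega)
  have a2' : ℓ * y' + 0 + 1 ≤ ℓ * h := mul_add_succ_le (ℓ := ℓ) (i := 0) hy' (by omega)
  rw [← Nat.add_assoc, ← Nat.add_assoc]
  refine S.run_eq (by omega) (by omega) (by omega) (by omega) (by omega) (by omega) (by omega)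
    (by omega) ?_ ?_ he
  · intro e he
    rw [Nat.add_assoc]
    exact S.bot_south hx hy0 hy (by omega) (by omega)
  · intro e he
    rw [Nat.add_assoc]
    exact S.bot_south hx' hy0' hy' (by omega) (by omega)

open Classical in
/-- The color of the tile type in `T` whose south glue is the black one and whose west glue
is `e`, if there is such a tile type. -/
noncomputable def rowColor (T : Finset (Tile BWG G)) (g : ℕ → ℕ → Tile BWG G) (e : G) :
    Option BWG :=
  if hu : ∃ u ∈ T, u.south = (g 1 1).south ∧ u.west = e then some hu.choose.color else none

theorem rowColor_eq (S : Asm k ℓ w h P T g) {u : Tile BWG G} (hu : u ∈ T)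
    (hs : u.south = (g 1 1).south) : rowColor T g u.west = some u.color := by
  have hex : ∃ v ∈ T, v.south = (g 1 1).south ∧ v.west = u.west := ⟨u, hu, hs, rfl⟩
  obtain ⟨h1, h2, h3⟩ := hex.choose_spec
  rw [rowColor, dif_pos hex, S.det _ h1 _ hu (h2.trans hs.symm) h3]

theorem rowColor_b (S : Asm k ℓ w h P T g) : rowColor T g (g 1 1).west = some BWG.black := by
  have := S.hl; have := S.le_mul; have := S.le_mul'
  rw [S.rowColor_eq (S.mem 1 1 (by omega) (by omega) (by omega) (by omega)) rfl, S.b_color]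

/-- An east glue in the bottom row of a supertile yields a white tile above the south glue of the
black tile. This is clear except for the glue before the last tile, where the row below turns. But
the row is so long that some white tile type repeats in it, so this glue occurs earlier too. -/
theorem bot_east [DecidableEq G] (S : Asm k ℓ w h P T g) {x y i : ℕ} (hx : x < w) (hy0 : 1 ≤ y)
    (hy : y < h) (hi : i + 2 ≤ ℓ) (hxi : 1 ≤ x ∨ 1 ≤ i) :
    rowColor T g (g (ℓ * x + i) (ℓ * y)).east = some BWG.white := by
  have hl := S.hl
  have short : ∀ i, i + 3 ≤ ℓ → (1 ≤ x ∨ 1 ≤ i) →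
      rowColor T g (g (ℓ * x + i) (ℓ * y)).east = some BWG.white := by
    intro i hi hxi
    rw [← S.bot_hor hx hy0 hy (by omega) hxi,
      S.rowColor_eq (S.bot_mem hx hy0 hy (by omega) (by omega))
        (S.bot_south hx hy0 hy (by omega) (by omega)),
      S.bot_color hx hy0 hy (by omega) (by omega)]
  rcases Nat.lt_or_ge (i + 2) ℓ with hlt | hge
  · exact short i hlt hxi
  obtain rfl : i = ℓ - 2 := by omega
  obtain ⟨a, ha, b, hb, hab, he⟩ : ∃ a ∈ Finset.Icc 1 (ℓ - 2), ∃ b ∈ Finset.Icc 1 (ℓ - 2),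
      a < b ∧ g (ℓ * x + a) (ℓ * y) = g (ℓ * x + b) (ℓ * y) := by
    by_contra hcon
    push Not at hcon
    have hc := S.wht ((Finset.Icc 1 (ℓ - 2)).image fun i => g (ℓ * x + i) (ℓ * y)) ?_ ?_
    · rw [Finset.card_image_of_injOn] at hc
      · rw [Nat.card_Icc] at hc
        omega
      · intro a ha b hb he
        rcases lt_trichotomy a b with h1 | h1 | h1
        · exact absurd he (hcon a ha b hb h1)
        · exact h1
        · exact absurd he.symm (hcon b hb a ha h1)
    · intro t ht
      obtain ⟨a, ha, rfl⟩ := Finset.mem_image.1 ht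
      rw [Finset.mem_Icc] at ha
      exact S.bot_mem hx hy0 hy (by omega) (by omega)
    · intro t ht
      obtain ⟨a, ha, rfl⟩ := Finset.mem_image.1 ht
      rw [Finset.mem_Icc] at ha
      exact S.bot_color hx hy0 hy (by omega) (by omega)
  rw [Finset.mem_Icc] at ha hb
  have := S.bot_run (d := ℓ - 2 - b) hx hy0 hy hx hy0 hy ha.1 (by omega) hb.1 (by omega) he
  rw [show ℓ - 2 = b + (ℓ - 2 - b) by omega, ← this]
  exact short _ (by omega) (by omega)

theorem C1_south [DecidableEq G] (S : Asm k ℓ w h P T g) {x y : ℕ} (hx : x < w) (hy0 : 1 ≤ y)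
    (hy : y < h) :
    (g (ℓ * x + (ℓ - 1)) (ℓ * y)).south = (g (ℓ * w - 1) (ℓ * h - 1)).north := by
  have := S.hl
  obtain ⟨y, rfl⟩ : ∃ z, y = z + 1 := ⟨y - 1, by omega⟩
  rw [S.bot_south_eq hx hy (by omega) (by omega), S.D_eq hx (by omega)]

/-- The second tile of the bottom row of a supertile determines its last tile. -/
theorem C1_eq [DecidableEq G] (S : Asm k ℓ w h P T g) {x y x' y' : ℕ} (hx : x < w)
    (hy0 : 1 ≤ y) (hy : y < h) (hx' : x' < w) (hy0' : 1 ≤ y') (hy' : y' < h)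
    (he : g (ℓ * x + 1) (ℓ * y) = g (ℓ * x' + 1) (ℓ * y')) :
    g (ℓ * x + (ℓ - 1)) (ℓ * y) = g (ℓ * x' + (ℓ - 1)) (ℓ * y') := by
  have hl := S.hl
  have := S.bot_run (d := ℓ - 3) hx hy0 hy hx' hy0' hy' le_rfl (by omega) le_rfl (by omega) he
  refine S.det _ (S.bot_mem hx hy0 hy (by omega) (by omega)) _
    (S.bot_mem hx' hy0' hy' (by omega) (by omega)) ?_ ?_
  · rw [S.C1_south hx hy0 hy, S.C1_south hx' hy0' hy']
  · rw [show ℓ - 1 = 1 + (ℓ - 3) + 1 by omega, S.bot_hor hx hy0 hy (by omega) (by omega),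
      S.bot_hor hx' hy0' hy' (by omega) (by omega), this]

/-- The corner tile in position `A` determines the second tile of the bottom row. -/
theorem bot1_eq [DecidableEq G] (S : Asm k ℓ w h P T g) {x y x' y' : ℕ} (hx0 : 1 ≤ x)
    (hx : x < w) (hy0 : 1 ≤ y) (hy : y < h) (hx0' : 1 ≤ x') (hx' : x' < w) (hy0' : 1 ≤ y')
    (hy' : y' < h) (he : g (ℓ * x) (ℓ * y) = g (ℓ * x') (ℓ * y')) :
    g (ℓ * x + 1) (ℓ * y) = g (ℓ * x' + 1) (ℓ * y') := by
  have hl := S.hl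
  refine S.det _ (S.bot_mem hx hy0 hy (by omega) (by omega)) _
    (S.bot_mem hx' hy0' hy' (by omega) (by omega)) ?_ ?_
  · rw [S.bot_south hx hy0 hy (by omega) (by omega),
      S.bot_south hx' hy0' hy' (by omega) (by omega)]
  · have h1 := S.bot_hor (i := 0) hx hy0 hy (by omega) (by omega)
    have h2 := S.bot_hor (i := 0) hx' hy0' hy' (by omega) (by omega)
    simp only [Nat.add_zero, Nat.zero_add] at h1 h2
    rw [h1, h2, he]

/-- The color of the tile type in `T` whose west glue is the black one and whose south glue
is `n`, if there is such a tile type. -/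
noncomputable def colColor [DecidableEq G] (T : Finset (Tile BWG G)) (g : ℕ → ℕ → Tile BWG G)
    (n : G) : Option BWG :=
  rowColor (T.image Tile.tr) (fun X Y => (g Y X).tr) n

theorem colColor_eq [DecidableEq G] (S : Asm k ℓ w h P T g) {u : Tile BWG G} (hu : u ∈ T)
    (hs : u.west = (g 1 1).west) : colColor T g u.south = some u.color :=
  S.tr.rowColor_eq (u := u.tr) (Finset.mem_image_of_mem Tile.tr hu) hs

theorem colColor_b [DecidableEq G] (S : Asm k ℓ w h P T g) :
    colColor T g (g 1 1).south = some BWG.black :=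
  S.tr.rowColor_b

theorem C2_rowColor [DecidableEq G] (S : Asm k ℓ w h P T g) {x y : ℕ} (hx0 : 1 ≤ x)
    (hx : x < w) (hy : y < h) :
    rowColor T g (g (ℓ * x) (ℓ * y + (ℓ - 1))).east = some BWG.gray := by
  have := S.hl; have := S.rng x hx y hy
  rw [S.C2_east hx0 hx hy, S.rowColor_eq (S.R_mem (by omega)) (S.R_south (by omega)),
    S.R_color (by omega), if_neg (by omega)]

theorem C1_colColor [DecidableEq G] (S : Asm k ℓ w h P T g) {x y : ℕ} (hx : x < w)
    (hy0 : 1 ≤ y) (hy : y < h) :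
    colColor T g (g (ℓ * x + (ℓ - 1)) (ℓ * y)).south = some BWG.gray := by
  obtain ⟨u, hu, hc, hw', hs⟩ := S.corner_gadget
  rw [S.C1_south hx hy0 hy, ← hs, S.colColor_eq hu hw', hc]

theorem C1_west [DecidableEq G] (S : Asm k ℓ w h P T g) {x y : ℕ} (hx : x < w)
    (hy0 : 1 ≤ y) (hy : y < h) :
    rowColor T g (g (ℓ * x + (ℓ - 1)) (ℓ * y)).west = some BWG.white := by
  have := S.hl
  rw [show ℓ - 1 = ℓ - 2 + 1 by omega, S.bot_hor hx hy0 hy (by omega) (by omega),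
    S.bot_east hx hy0 hy (by omega) (by omega)]

/-- The white tile of the gadget row: black glues above and below it, and a gray tile follows. -/
theorem RW_spec [DecidableEq G] (S : Asm k ℓ w h P T g) :
    g (k + 1) (ℓ * h + 1) ∈ T ∧ (g (k + 1) (ℓ * h + 1)).color = BWG.white ∧
    rowColor T g (g (k + 1) (ℓ * h + 1)).east = some BWG.gray ∧
    colColor T g (g (k + 1) (ℓ * h + 1)).north = some BWG.black ∧
    colColor T g (g (k + 1) (ℓ * h + 1)).south = some BWG.black := by
  have := S.hl
  refine ⟨S.R_mem (by omega), ?_, ?_, ?_, ?_⟩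
  · rw [S.R_color (by omega), if_pos rfl]
  · rw [← S.R_hor (by omega), S.rowColor_eq (S.R_mem (by omega)) (S.R_south (by omega)),
      S.R_color (by omega), if_neg (by omega)]
  · rw [S.R_north (by omega), S.colColor_b]
  · rw [S.R_south (by omega), S.colColor_b]

end Asm

/-! ### Counting the white tile types -/

/-- If `a i` determines `b i`, then `b` takes at most as many values as `a`. -/
theorem card_image_le_of_factor {ι α β : Type*} [DecidableEq α] [DecidableEq β] (I : Finset ι)
    (a : ι → α) (b : ι → β) (hab : ∀ i ∈ I, ∀ j ∈ I, a i = a j → b i = b j) :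
    (I.image b).card ≤ (I.image a).card := by
  classical
  rcases I.eq_empty_or_nonempty with rfl | ⟨i0, _⟩
  · simp
  have : Nonempty ι := ⟨i0⟩
  have hex : ∀ t ∈ I.image b, ∃ i ∈ I, b i = t := fun t ht => Finset.mem_image.1 ht
  choose! φ hφ hφ' using hex
  refine Finset.card_le_card_of_injOn (fun t => a (φ t))
    (fun t ht => Finset.mem_image_of_mem a (hφ t ht)) ?_
  intro t ht u hu he
  rw [← hφ' t ht, ← hφ' u hu]
  exact hab _ (hφ t ht) _ (hφ u hu) he

namespace Asm

variable {G : Type} {k ℓ w h : ℕ} {P : ℕ → ℕ → ℕ} {T : Finset (Tile BWG G)}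
  {g : ℕ → ℕ → Tile BWG G}

/-- There is a tile type in position `C₂` for each color that occurs outside the left column,
and there are as many of them for the color `o` as supertiles of this color have north outputs. -/
theorem C2_card [DecidableEq G] (S : Asm k ℓ w h P T g) (o : ℕ)
    (hsurj : ∀ c, 1 ≤ c → c ≤ k → ∃ x < w, ∃ y < h, P x y = c)
    (s : Finset (Tile BWG G))
    (hs : ∀ x y, 1 ≤ x → x < w → y < h → g (ℓ * x) (ℓ * y + (ℓ - 1)) ∈ s)
    (N : Finset G) (hN : ∀ n ∈ N, ∃ x y, 1 ≤ x ∧ x < w ∧ y < h ∧ P x y = o ∧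
      (g (ℓ * x) (ℓ * y + (ℓ - 1))).north = n) :
    k + N.card ≤ s.card + h + 1 := by
  let I := Finset.Ico 1 w ×ˢ Finset.range h
  have hI : ∀ p ∈ I, 1 ≤ p.1 ∧ p.1 < w ∧ p.2 < h := by
    intro p hp
    simp only [I, Finset.mem_product, Finset.mem_Ico, Finset.mem_range] at hp
    tauto
  let C2 : ℕ × ℕ → Tile BWG G := fun p => g (ℓ * p.1) (ℓ * p.2 + (ℓ - 1))
  have hdet : ∀ p ∈ I, ∀ q ∈ I, C2 p = C2 q → P p.1 p.2 = P q.1 q.2 := by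
    intro p hp q hq he
    obtain ⟨h1, h2, h3⟩ := hI p hp
    obtain ⟨h4, h5, h6⟩ := hI q hq
    exact S.P_eq_of_C2 h1 h2 h3 h4 h5 h6 he
  let I1 := I.filter fun p => P p.1 p.2 = o
  let I2 := I.filter fun p => P p.1 p.2 ≠ o
  have hdisj : Disjoint (I1.image C2) (I2.image C2) := by
    rw [Finset.disjoint_left]
    intro t ht ht'
    obtain ⟨p, hp, rfl⟩ := Finset.mem_image.1 ht
    obtain ⟨q, hq, he⟩ := Finset.mem_image.1 ht'
    obtain ⟨hp, hpo⟩ := Finset.mem_filter.1 hp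
    obtain ⟨hq, hqo⟩ := Finset.mem_filter.1 hq
    exact hqo ((hdet q hq p hp he).trans hpo)
  have hsub : I1.image C2 ∪ I2.image C2 ⊆ s := by
    intro t ht
    rw [← Finset.image_union] at ht
    obtain ⟨p, hp, rfl⟩ := Finset.mem_image.1 ht
    have hp : p ∈ I := by
      rcases Finset.mem_union.1 hp with hp | hp
      · exact (Finset.mem_filter.1 hp).1
      · exact (Finset.mem_filter.1 hp).1
    obtain ⟨h1, h2, h3⟩ := hI p hp
    exact hs _ _ h1 h2 h3
  have hcard := Finset.card_le_card hsub
  rw [Finset.card_union_of_disjoint hdisj] at hcard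
  have h1 : N.card ≤ (I1.image C2).card := by
    refine le_trans (Finset.card_le_card ?_)
      (card_image_le_of_factor I1 C2 (fun p => (C2 p).north) fun p _ q _ he => by rw [he])
    intro n hn
    obtain ⟨x, y, h1, h2, h3, h4, rfl⟩ := hN n hn
    refine Finset.mem_image.2 ⟨(x, y), Finset.mem_filter.2 ⟨?_, h4⟩, rfl⟩
    simp only [I, Finset.mem_product, Finset.mem_Ico, Finset.mem_range]
    exact ⟨⟨h1, h2⟩, h3⟩
  have h2 : (I2.image fun p => P p.1 p.2).card ≤ (I2.image C2).card :=
    card_image_le_of_factor I2 C2 _ fun p hp q hq he =>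
      hdet p (Finset.mem_filter.1 hp).1 q (Finset.mem_filter.1 hq).1 he
  have h3 : Finset.Icc 1 k ⊆
      insert o ((I2.image fun p => P p.1 p.2) ∪ (Finset.range h).image (P 0)) := by
    intro c hc
    rw [Finset.mem_Icc] at hc
    obtain ⟨x, hx, y, hy, rfl⟩ := hsurj c hc.1 hc.2
    rw [Finset.mem_insert, Finset.mem_union]
    by_cases hxo : P x y = o
    · exact Or.inl hxo
    · right
      rcases Nat.eq_zero_or_pos x with rfl | hx0
      · exact Or.inr (Finset.mem_image_of_mem _ (Finset.mem_range.2 hy))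
      · refine Or.inl (Finset.mem_image.2 ⟨(x, y), Finset.mem_filter.2 ⟨?_, hxo⟩, rfl⟩)
        simp only [I, Finset.mem_product, Finset.mem_Ico, Finset.mem_range]
        exact ⟨⟨hx0, hx⟩, hy⟩
  have h4 := Finset.card_le_card h3
  have h5 := Finset.card_insert_le o
    ((I2.image fun p => P p.1 p.2) ∪ (Finset.range h).image (P 0))
  have h6 := Finset.card_union_le (I2.image fun p => P p.1 p.2) ((Finset.range h).image (P 0))
  have h7 := Finset.card_image_le (s := Finset.range h) (f := P 0)
  rw [Finset.card_range] at h7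
  rw [Nat.card_Icc] at h4
  omega

/-- The white tile types fall into seven disjoint classes: the tiles in the positions `A`, the
left column, the bottom row, `C₂` and `C₁`, and the two white counter tiles. -/
theorem white_card [DecidableEq G] (S : Asm k ℓ w h P T g) {m : ℕ}
    (hm : ∀ s : Finset (Tile BWG G), s ⊆ T → (∀ t ∈ s, t.color = BWG.white) → s.card ≤ m)
    (I0 I1 I2 : Finset (ℕ × ℕ))
    (hI0 : ∀ p ∈ I0, 1 ≤ p.1 ∧ p.1 < w ∧ 1 ≤ p.2 ∧ p.2 < h)
    (hI1 : ∀ p ∈ I1, p.1 < w ∧ 1 ≤ p.2 ∧ p.2 < h)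
    (hI2 : ∀ p ∈ I2, 1 ≤ p.1 ∧ p.1 < w ∧ p.2 < h) :
    (I0.image fun p => g (ℓ * p.1) (ℓ * p.2)).card
      + 2 * (I2.image fun p => g (ℓ * p.1) (ℓ * p.2 + (ℓ - 1))).card
      + 2 * (I1.image fun p => g (ℓ * p.1 + (ℓ - 1)) (ℓ * p.2)).card + 2 ≤ m := by
  have hl := S.hl
  set sA := I0.image fun p => g (ℓ * p.1) (ℓ * p.2) with hsA
  set sC2 := I2.image fun p => g (ℓ * p.1) (ℓ * p.2 + (ℓ - 1)) with hsC2
  set sC1 := I1.image fun p => g (ℓ * p.1 + (ℓ - 1)) (ℓ * p.2) with hsC1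
  set sL := I2.image fun p => g (ℓ * p.1) (ℓ * p.2 + 1) with hsL
  set sB := I1.image fun p => g (ℓ * p.1 + 1) (ℓ * p.2) with hsB
  have hCL : sC2.card ≤ sL.card := by
    refine card_image_le_of_factor I2 _ _ fun p hp q hq he => ?_
    obtain ⟨h1, h2, h3⟩ := hI2 p hp
    obtain ⟨h4, h5, h6⟩ := hI2 q hq
    exact Tile.tr_injective (S.tr.C1_eq h3 h1 h2 h6 h4 h5 (congrArg Tile.tr he))
  have hCB : sC1.card ≤ sB.card := by
    refine card_image_le_of_factor I1 _ _ fun p hp q hq he => ?_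
    obtain ⟨h1, h2, h3⟩ := hI1 p hp
    obtain ⟨h4, h5, h6⟩ := hI1 q hq
    exact S.C1_eq h1 h2 h3 h4 h5 h6 he
  have trmem : ∀ {t : Tile BWG G}, t.tr ∈ T.image Tile.tr → t ∈ T := by
    intro t ht
    obtain ⟨u, hu, he⟩ := Finset.mem_image.1 ht
    rwa [← Tile.tr_injective he]
  have pA : ∀ t ∈ sA, (t ∈ T ∧ t.color = BWG.white) ∧
      rowColor T g t.east = some BWG.white ∧ colColor T g t.north = some BWG.white := by
    intro t ht
    obtain ⟨p, hp, rfl⟩ := Finset.mem_image.1 ht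
    obtain ⟨h1, h2, h3, h4⟩ := hI0 p hp
    exact ⟨⟨S.bot_mem (i := 0) h2 h3 h4 (by omega) (Or.inl h1),
      S.bot_color (i := 0) h2 h3 h4 (by omega) (Or.inl h1)⟩,
      S.bot_east (i := 0) h2 h3 h4 (by omega) (Or.inl h1),
      S.tr.bot_east (i := 0) h4 h1 h2 (by omega) (Or.inl h3)⟩
  have pB : ∀ t ∈ sB, (t ∈ T ∧ t.color = BWG.white) ∧
      rowColor T g t.east = some BWG.white ∧ colColor T g t.north = some BWG.black := by
    intro t ht
    obtain ⟨p, hp, rfl⟩ := Finset.mem_image.1 ht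
    obtain ⟨h1, h2, h3⟩ := hI1 p hp
    refine ⟨⟨S.bot_mem h1 h2 h3 (by omega) (by omega),
      S.bot_color h1 h2 h3 (by omega) (by omega)⟩,
      S.bot_east h1 h2 h3 (by omega) (by omega), ?_⟩
    rw [S.bot_north h1 h2 h3 (by omega) (by omega), S.colColor_b]
  have pL : ∀ t ∈ sL, (t ∈ T ∧ t.color = BWG.white) ∧
      rowColor T g t.east = some BWG.black ∧ colColor T g t.north = some BWG.white := by
    intro t ht
    obtain ⟨p, hp, rfl⟩ := Finset.mem_image.1 ht
    obtain ⟨h1, h2, h3⟩ := hI2 p hp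
    refine ⟨⟨trmem (S.tr.bot_mem h3 h1 h2 (by omega) (by omega)),
      S.tr.bot_color h3 h1 h2 (by omega) (by omega)⟩, ?_,
      S.tr.bot_east h3 h1 h2 (by omega) (by omega)⟩
    have h4 := S.tr.bot_north (i := 1) h3 h1 h2 (by omega) (by omega)
    exact (congrArg (rowColor T g) h4).trans S.rowColor_b
  have pC2 : ∀ t ∈ sC2, (t ∈ T ∧ t.color = BWG.white) ∧
      rowColor T g t.east = some BWG.gray ∧ colColor T g t.south = some BWG.white := by
    intro t ht
    obtain ⟨p, hp, rfl⟩ := Finset.mem_image.1 ht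
    obtain ⟨h1, h2, h3⟩ := hI2 p hp
    exact ⟨⟨S.C2_mem h1 h2 h3, S.C2_color h1 h2 h3⟩, S.C2_rowColor h1 h2 h3,
      S.tr.C1_west h3 h1 h2⟩
  have pC1 : ∀ t ∈ sC1, (t ∈ T ∧ t.color = BWG.white) ∧
      rowColor T g t.west = some BWG.white ∧ colColor T g t.north = some BWG.gray ∧
      colColor T g t.south = some BWG.gray := by
    intro t ht
    obtain ⟨p, hp, rfl⟩ := Finset.mem_image.1 ht
    obtain ⟨h1, h2, h3⟩ := hI1 p hp
    exact ⟨⟨S.bot_mem h1 h2 h3 (by omega) (by omega),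
      S.bot_color h1 h2 h3 (by omega) (by omega)⟩, S.C1_west h1 h2 h3,
      S.tr.C2_rowColor h2 h3 h1, S.C1_colColor h1 h2 h3⟩
  obtain ⟨r1, r2, r3, r4, r5⟩ := S.RW_spec
  obtain ⟨v1, v2, v3, v4, v5⟩ := S.tr.RW_spec
  replace v1 := trmem v1
  set tH := g (k + 1) (ℓ * h + 1)
  set tV := g (ℓ * w + 1) (k + 1)
  change tV.color = _ at v2
  change colColor T g tV.north = _ at v3
  have key : ∀ t : Tile BWG G, t.tr.tr = t := fun _ => rfl
  have him : (T.image Tile.tr).image Tile.tr = T := by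
    rw [Finset.image_image]
    exact (Finset.image_congr fun t _ => key t).trans Finset.image_id
  have hcc : ∀ e, colColor (T.image Tile.tr) (fun X Y => (g Y X).tr) e = rowColor T g e := by
    intro e
    rw [colColor, him]
    rfl
  rw [hcc] at v4 v5
  change rowColor T g tV.east = _ at v4
  change rowColor T g tV.west = _ at v5
  let H : Finset (Tile BWG G) := {tH}
  let V : Finset (Tile BWG G) := {tV}
  have d1 : Disjoint sA sB := by
    rw [Finset.disjoint_left]
    intro t h1 h2
    have a := pA t h1; have b := pB t h2
    exact nomatch a.2.2.symm.trans b.2.2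
  have d2 : Disjoint (sA ∪ sB) sL := by
    rw [Finset.disjoint_left]
    intro t h1 h2
    have b := pL t h2
    rcases Finset.mem_union.1 h1 with h1 | h1
    · have a := pA t h1; exact nomatch a.2.1.symm.trans b.2.1
    · have a := pB t h1; exact nomatch a.2.1.symm.trans b.2.1
  have d3 : Disjoint (sA ∪ sB ∪ sL) sC2 := by
    rw [Finset.disjoint_left]
    intro t h1 h2
    have b := pC2 t h2
    simp only [Finset.mem_union] at h1
    rcases h1 with (h1 | h1) | h1
    · have a := pA t h1; exact nomatch a.2.1.symm.trans b.2.1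
    · have a := pB t h1; exact nomatch a.2.1.symm.trans b.2.1
    · have a := pL t h1; exact nomatch a.2.1.symm.trans b.2.1
  have d4 : Disjoint (sA ∪ sB ∪ sL ∪ sC2) sC1 := by
    rw [Finset.disjoint_left]
    intro t h1 h2
    have b := pC1 t h2
    simp only [Finset.mem_union] at h1
    rcases h1 with ((h1 | h1) | h1) | h1
    · have a := pA t h1; exact nomatch a.2.2.symm.trans b.2.2.1
    · have a := pB t h1; exact nomatch a.2.2.symm.trans b.2.2.1
    · have a := pL t h1; exact nomatch a.2.2.symm.trans b.2.2.1
    · have a := pC2 t h1; exact nomatch a.2.2.symm.trans b.2.2.2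
  have d5 : tH ∉ sA ∪ sB ∪ sL ∪ sC2 ∪ sC1 := by
    intro h1
    simp only [Finset.mem_union] at h1
    rcases h1 with (((h1 | h1) | h1) | h1) | h1
    · have a := pA _ h1; exact nomatch a.2.1.symm.trans r3
    · have a := pB _ h1; exact nomatch a.2.1.symm.trans r3
    · have a := pL _ h1; exact nomatch a.2.1.symm.trans r3
    · have a := pC2 _ h1; exact nomatch a.2.2.symm.trans r5
    · have a := pC1 _ h1; exact nomatch a.2.2.1.symm.trans r4
  have d6 : tV ∉ insert tH (sA ∪ sB ∪ sL ∪ sC2 ∪ sC1) := by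
    intro h1
    simp only [Finset.mem_union, Finset.mem_insert] at h1
    rcases h1 with h1 | (((h1 | h1) | h1) | h1) | h1
    · rw [h1] at v4
      exact nomatch r3.symm.trans v4
    · have a := pA _ h1; exact nomatch a.2.2.symm.trans v3
    · have a := pB _ h1; exact nomatch a.2.2.symm.trans v3
    · have a := pL _ h1; exact nomatch a.2.2.symm.trans v3
    · have a := pC2 _ h1; exact nomatch a.2.1.symm.trans v4
    · have a := pC1 _ h1; exact nomatch a.2.1.symm.trans v5
  have hW : ∀ t ∈ insert tV (insert tH (sA ∪ sB ∪ sL ∪ sC2 ∪ sC1)),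
      t ∈ T ∧ t.color = BWG.white := by
    intro t h1
    simp only [Finset.mem_union, Finset.mem_insert] at h1
    rcases h1 with rfl | rfl | (((h1 | h1) | h1) | h1) | h1
    · exact ⟨v1, v2⟩
    · exact ⟨r1, r2⟩
    · exact (pA t h1).1
    · exact (pB t h1).1
    · exact (pL t h1).1
    · exact (pC2 t h1).1
    · exact (pC1 t h1).1
  have hfin := hm _ (fun t ht => (hW t ht).1) (fun t ht => (hW t ht).2)
  rw [Finset.card_insert_of_notMem d6, Finset.card_insert_of_notMem d5,
    Finset.card_union_of_disjoint d4, Finset.card_union_of_disjoint d3,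
    Finset.card_union_of_disjoint d2, Finset.card_union_of_disjoint d1] at hfin
  omega


theorem A_south (S : Asm k ℓ w h P T g) {x y : ℕ} (hx0 : 1 ≤ x) (hx : x < w) (hy : y < h) :
    (g (ℓ * x) (ℓ * (y + 1))).south = (g (ℓ * x) (ℓ * y + (ℓ - 1))).north := by
  have := S.hl
  have a0 : ℓ ≤ ℓ * x := Nat.le_mul_of_pos_right _ hx0
  have a1 : ℓ * x + 0 + 1 ≤ ℓ * w := mul_add_succ_le (ℓ := ℓ) (i := 0) hx (by omega)
  have a2 : ℓ * y + (ℓ - 1) + 1 ≤ ℓ * h := mul_add_succ_le hy (by omega)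
  rw [← S.ver _ _ (by omega) (by omega) (by omega) (by omega)]
  congr 2
  rw [Nat.mul_succ]
  omega

theorem A_west [DecidableEq G] (S : Asm k ℓ w h P T g) {x y : ℕ} (hx : x < w) (hy0 : 1 ≤ y)
    (hy : y < h) : (g (ℓ * (x + 1)) (ℓ * y)).west = (g (ℓ * x + (ℓ - 1)) (ℓ * y)).east :=
  S.tr.A_south hy0 hy hx

theorem A_mem (S : Asm k ℓ w h P T g) {x y : ℕ} (hx0 : 1 ≤ x) (hx : x < w) (hy0 : 1 ≤ y)
    (hy : y < h) : g (ℓ * x) (ℓ * y) ∈ T :=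
  S.bot_mem (i := 0) hx hy0 hy (by have := S.hl; omega) (Or.inl hx0)

theorem C1_eq_of_A [DecidableEq G] (S : Asm k ℓ w h P T g) {x y x' y' : ℕ} (hx0 : 1 ≤ x)
    (hx : x < w) (hy0 : 1 ≤ y) (hy : y < h) (hx0' : 1 ≤ x') (hx' : x' < w) (hy0' : 1 ≤ y')
    (hy' : y' < h) (he : g (ℓ * x) (ℓ * y) = g (ℓ * x') (ℓ * y')) :
    g (ℓ * x + (ℓ - 1)) (ℓ * y) = g (ℓ * x' + (ℓ - 1)) (ℓ * y') :=
  S.C1_eq hx hy0 hy hx' hy0' hy' (S.bot1_eq hx0 hx hy0 hy hx0' hx' hy0' hy' he)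

theorem C2_eq_of_A [DecidableEq G] (S : Asm k ℓ w h P T g) {x y x' y' : ℕ} (hx0 : 1 ≤ x)
    (hx : x < w) (hy0 : 1 ≤ y) (hy : y < h) (hx0' : 1 ≤ x') (hx' : x' < w) (hy0' : 1 ≤ y')
    (hy' : y' < h) (he : g (ℓ * x) (ℓ * y) = g (ℓ * x') (ℓ * y')) :
    g (ℓ * x) (ℓ * y + (ℓ - 1)) = g (ℓ * x') (ℓ * y' + (ℓ - 1)) :=
  Tile.tr_injective
    (S.tr.C1_eq_of_A hy0 hy hx0 hx hy0' hy' hx0' hx' (congrArg Tile.tr he))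

/-- The eight colors at the positions `(2 * i + 2, 2)` require eight different input pairs, all
taken from the north and east outputs of supertiles of the color `o`. So these have at least
`6` outputs in total, since `a * b ≥ 8` implies `a + b ≥ 6`, which makes the tile types in the
positions `C₂` and `C₁` numerous and leaves few white tile types for the positions `A`. -/
theorem A_card [DecidableEq G] (S : Asm k ℓ w h P T g) (o : ℕ) (hw : 18 ≤ w) (hh : 3 ≤ h)
    (hm : ∀ s : Finset (Tile BWG G), s ⊆ T → (∀ t ∈ s, t.color = BWG.white) →
      s.card ≤ 5 * k + 14 - 3 * (w + h))
    (hsurj : ∀ c, 1 ≤ c → c ≤ k → ∃ x < w, ∃ y < h, P x y = c)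
    (ho1 : ∀ i < 8, P (2 * i + 2) 1 = o) (ho2 : ∀ i < 8, P (2 * i + 1) 2 = o)
    (hinj : ∀ i < 8, ∀ j < 8, P (2 * i + 2) 2 = P (2 * j + 2) 2 → i = j) :
    ((Finset.Ico 1 w ×ˢ Finset.Ico 1 h).image fun p => g (ℓ * p.1) (ℓ * p.2)).card
      + w + h ≤ k + 4 := by
  let I2 := Finset.Ico 1 w ×ˢ Finset.range h
  let I1 := Finset.range w ×ˢ Finset.Ico 1 h
  have hW := S.white_card hm (Finset.Ico 1 w ×ˢ Finset.Ico 1 h) I1 I2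
    (fun p hp => by
      simp only [Finset.mem_product, Finset.mem_Ico] at hp; tauto)
    (fun p hp => by
      simp only [I1, Finset.mem_product, Finset.mem_Ico, Finset.mem_range] at hp; tauto)
    (fun p hp => by
      simp only [I2, Finset.mem_product, Finset.mem_Ico, Finset.mem_range] at hp; tauto)
  let nS := (Finset.range 8).image fun i => (g (ℓ * (2 * i + 2)) (ℓ * 1 + (ℓ - 1))).north
  let eS := (Finset.range 8).image fun i => (g (ℓ * (2 * i + 1) + (ℓ - 1)) (ℓ * 2)).east
  have hs2 : ∀ x y, 1 ≤ x → x < w → y < h → g (ℓ * x) (ℓ * y + (ℓ - 1)) ∈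
      I2.image fun p => g (ℓ * p.1) (ℓ * p.2 + (ℓ - 1)) := by
    intro x y h1 h2 h3
    refine Finset.mem_image.2 ⟨(x, y), ?_, rfl⟩
    simp only [I2, Finset.mem_product, Finset.mem_Ico, Finset.mem_range]
    exact ⟨⟨h1, h2⟩, h3⟩
  have hs1 : ∀ y x, 1 ≤ y → y < h → x < w → (g (ℓ * x + (ℓ - 1)) (ℓ * y)).tr ∈
      (I1.image fun p => g (ℓ * p.1 + (ℓ - 1)) (ℓ * p.2)).image Tile.tr := by
    intro y x h1 h2 h3
    refine Finset.mem_image_of_mem Tile.tr (Finset.mem_image.2 ⟨(x, y), ?_, rfl⟩)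
    simp only [I1, Finset.mem_product, Finset.mem_Ico, Finset.mem_range]
    exact ⟨h3, h1, h2⟩
  have hn : ∀ n ∈ nS, ∃ x y, 1 ≤ x ∧ x < w ∧ y < h ∧ P x y = o ∧
      (g (ℓ * x) (ℓ * y + (ℓ - 1))).north = n := by
    intro n hn
    obtain ⟨i, hi, rfl⟩ := Finset.mem_image.1 hn
    rw [Finset.mem_range] at hi
    exact ⟨2 * i + 2, 1, by omega, by omega, by omega, ho1 i hi, rfl⟩
  have he : ∀ n ∈ eS, ∃ y x, 1 ≤ y ∧ y < h ∧ x < w ∧ P x y = o ∧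
      (g (ℓ * x + (ℓ - 1)) (ℓ * y)).east = n := by
    intro n hn
    obtain ⟨i, hi, rfl⟩ := Finset.mem_image.1 hn
    rw [Finset.mem_range] at hi
    exact ⟨2, 2 * i + 1, by omega, by omega, by omega, ho2 i hi, rfl⟩
  have hsurj' : ∀ c, 1 ≤ c → c ≤ k → ∃ y < h, ∃ x < w, P x y = c := by
    intro c h1 h2
    obtain ⟨x, hx, y, hy, he⟩ := hsurj c h1 h2
    exact ⟨y, hy, x, hx, he⟩
  have hN := S.C2_card o hsurj _ hs2 nS hn
  have hE := S.tr.C2_card o hsurj' _ hs1 eS he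
  rw [Finset.card_image_of_injective _ Tile.tr_injective] at hE
  have h8 : 8 ≤ nS.card * eS.card := by
    rw [← Finset.card_product]
    have := Finset.card_le_card_of_injOn (s := Finset.range 8) (t := nS ×ˢ eS)
      (fun i => ((g (ℓ * (2 * i + 2)) (ℓ * 1 + (ℓ - 1))).north,
        (g (ℓ * (2 * i + 1) + (ℓ - 1)) (ℓ * 2)).east))
      (fun i hi => Finset.mem_product.2
        ⟨Finset.mem_image_of_mem _ hi, Finset.mem_image_of_mem _ hi⟩) ?_
    · rwa [Finset.card_range] at this
    · intro i hi j hj he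
      simp only [Finset.coe_range, Set.mem_Iio] at hi hj
      obtain ⟨e1, e2⟩ := Prod.mk.inj he
      rw [← S.A_south (by omega) (by omega) (by omega),
        ← S.A_south (by omega) (by omega) (by omega)] at e1
      rw [← S.A_west (by omega) (by omega) (by omega),
        ← S.A_west (by omega) (by omega) (by omega)] at e2
      have e3 := S.det _ (S.A_mem (by omega) (by omega) (by omega) (by omega)) _
        (S.A_mem (by omega) (by omega) (by omega) (by omega)) e1 e2
      exact hinj i hi j hj (S.P_eq_of_C2 (by omega) (by omega) (by omega) (by omega) (by omega)
        (by omega) (S.C2_eq_of_A (by omega) (by omega) (by omega) (by omega) (by omega)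
          (by omega) (by omega) (by omega) e3))
  have h6 : 6 ≤ nS.card + eS.card := by nlinarith [sq_nonneg ((nS.card : ℤ) - eS.card)]
  omega

/-! ### The tile assembly system for `P` -/

/-- The glue on the south side of position `(x, y)`: inside the pattern the south input of the
supertile at `(x, y)`, on the left column and the bottom row the column number. -/
def vGlue (ℓ : ℕ) (g : ℕ → ℕ → Tile BWG G) (x y : ℕ) : G ⊕ ℕ :=
  if 1 ≤ x ∧ 1 ≤ y then Sum.inl (g (ℓ * x) (ℓ * y)).south else Sum.inr x

/-- The glue on the west side of position `(x, y)`: inside the pattern the west input of the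
supertile at `(x, y)`, on the left column and the bottom row the row number. -/
def hGlue (ℓ : ℕ) (g : ℕ → ℕ → Tile BWG G) (x y : ℕ) : G ⊕ ℕ :=
  if 1 ≤ x ∧ 1 ≤ y then Sum.inl (g (ℓ * x) (ℓ * y)).west else Sum.inr y

/-- The tile type at position `(x, y)` of `P`, with the inputs and outputs of the supertile. -/
def bigTile (ℓ : ℕ) (P : ℕ → ℕ → ℕ) (g : ℕ → ℕ → Tile BWG G) (x y : ℕ) : Tile ℕ (G ⊕ ℕ) :=
  ⟨P x y, vGlue ℓ g x (y + 1), hGlue ℓ g (x + 1) y, vGlue ℓ g x y, hGlue ℓ g x y⟩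

theorem bigTile_eq_of_A [DecidableEq G] (S : Asm k ℓ w h P T g) {x y x' y' : ℕ} (hx0 : 1 ≤ x)
    (hx : x < w) (hy0 : 1 ≤ y) (hy : y < h) (hx0' : 1 ≤ x') (hx' : x' < w) (hy0' : 1 ≤ y')
    (hy' : y' < h) (he : g (ℓ * x) (ℓ * y) = g (ℓ * x') (ℓ * y')) :
    bigTile ℓ P g x y = bigTile ℓ P g x' y' := by
  have h1 := S.C1_eq_of_A hx0 hx hy0 hy hx0' hx' hy0' hy' he
  have h2 := S.C2_eq_of_A hx0 hx hy0 hy hx0' hx' hy0' hy' he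
  have h3 := S.P_eq_of_C2 hx0 hx hy hx0' hx' hy' h2
  simp only [bigTile, vGlue, hGlue, Tile.mk.injEq]
  simp only [hx0, hy0, hx0', hy0', and_self, if_true, le_add_iff_nonneg_left, zero_le,
    S.A_south hx0 hx hy, S.A_south hx0' hx' hy', S.A_west hx hy0 hy, S.A_west hx' hy0' hy',
    h1, h2, h3, he]

theorem bigTile_det [DecidableEq G] (S : Asm k ℓ w h P T g) {x y x' y' : ℕ}
    (hx : x < w) (hy : y < h) (hx' : x' < w) (hy' : y' < h)
    (hs : vGlue ℓ g x y = vGlue ℓ g x' y') (hw : hGlue ℓ g x y = hGlue ℓ g x' y') :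
    bigTile ℓ P g x y = bigTile ℓ P g x' y' := by
  rw [vGlue, vGlue] at hs
  rw [hGlue, hGlue] at hw
  split_ifs at hs hw with h1 h2 h2
  · exact S.bigTile_eq_of_A h1.1 hx h1.2 hy h2.1 hx' h2.2 hy' (S.det _
      (S.A_mem h1.1 hx h1.2 hy) _ (S.A_mem h2.1 hx' h2.2 hy') (Sum.inl.inj hs) (Sum.inl.inj hw))
  · rw [Sum.inr.inj hs, Sum.inr.inj hw]

theorem bigTile_card [DecidableEq G] (S : Asm k ℓ w h P T g) :
    ((Finset.range w ×ˢ Finset.range h).image fun p => bigTile ℓ P g p.1 p.2).card + 1 ≤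
      ((Finset.Ico 1 w ×ˢ Finset.Ico 1 h).image fun p => g (ℓ * p.1) (ℓ * p.2)).card + w + h := by
  have hw := S.hw; have hh := S.hh
  have hsub : ((Finset.range w ×ˢ Finset.range h).image fun p => bigTile ℓ P g p.1 p.2) ⊆
      ((Finset.Ico 1 w ×ˢ Finset.Ico 1 h).image fun p => bigTile ℓ P g p.1 p.2) ∪
      ((Finset.range w).image (fun x => bigTile ℓ P g x 0) ∪
        (Finset.Ico 1 h).image (fun y => bigTile ℓ P g 0 y)) := by
    intro t ht
    obtain ⟨⟨x, y⟩, hp, rfl⟩ := Finset.mem_image.1 ht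
    simp only [Finset.mem_product, Finset.mem_range] at hp
    rw [Finset.mem_union, Finset.mem_union]
    rcases Nat.eq_zero_or_pos y with rfl | hy
    · exact Or.inr (Or.inl (Finset.mem_image.2 ⟨x, Finset.mem_range.2 hp.1, rfl⟩))
    rcases Nat.eq_zero_or_pos x with rfl | hx
    · exact Or.inr (Or.inr (Finset.mem_image.2 ⟨y, Finset.mem_Ico.2 ⟨hy, hp.2⟩, rfl⟩))
    · refine Or.inl (Finset.mem_image.2 ⟨(x, y), ?_, rfl⟩)
      simp only [Finset.mem_product, Finset.mem_Ico]
      exact ⟨⟨hx, hp.1⟩, hy, hp.2⟩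
  have h1 := Finset.card_le_card hsub
  have h2 := Finset.card_union_le
    ((Finset.Ico 1 w ×ˢ Finset.Ico 1 h).image fun p => bigTile ℓ P g p.1 p.2)
    ((Finset.range w).image (fun x => bigTile ℓ P g x 0) ∪
        (Finset.Ico 1 h).image (fun y => bigTile ℓ P g 0 y))
  have h3 := Finset.card_union_le ((Finset.range w).image (fun x => bigTile ℓ P g x 0))
    ((Finset.Ico 1 h).image (fun y => bigTile ℓ P g 0 y))
  have h4 := Finset.card_image_le (s := Finset.range w) (f := fun x => bigTile ℓ P g x 0)
  have h5 := Finset.card_image_le (s := Finset.Ico 1 h) (f := fun y => bigTile ℓ P g 0 y)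
  have h6 := card_image_le_of_factor (Finset.Ico 1 w ×ˢ Finset.Ico 1 h)
    (fun p => g (ℓ * p.1) (ℓ * p.2)) (fun p => bigTile ℓ P g p.1 p.2) (by
      intro p hp q hq he
      simp only [Finset.mem_product, Finset.mem_Ico] at hp hq
      exact S.bigTile_eq_of_A hp.1.1 hp.1.2 hp.2.1 hp.2.2 hq.1.1 hq.1.2 hq.2.1 hq.2.2 he)
  rw [Finset.card_range] at h4
  rw [Nat.card_Ico] at h5
  omega

/-- The system whose tile types are those at the positions of `P`. -/
def system [DecidableEq G] (w h ℓ : ℕ) (P : ℕ → ℕ → ℕ) (g : ℕ → ℕ → Tile BWG G) :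
    RTAS ℕ (G ⊕ ℕ) where
  tiles := (Finset.range w ×ˢ Finset.range h).image fun p => bigTile ℓ P g p.1 p.2
  seedN x := vGlue ℓ g x 0
  seedE y := hGlue ℓ g 0 y

theorem system_directed [DecidableEq G] (S : Asm k ℓ w h P T g) :
    DirectedTAS (system w h ℓ P g) := by
  intro t ht u hu hne
  by_contra hcon
  push Not at hcon
  obtain ⟨p, hp, rfl⟩ := Finset.mem_image.1 ht
  obtain ⟨q, hq, rfl⟩ := Finset.mem_image.1 hu
  simp only [Finset.mem_product, Finset.mem_range] at hp hq
  exact hne (S.bigTile_det hp.1 hp.2 hq.1 hq.2 hcon.1 hcon.2)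

theorem system_selfAssembles [DecidableEq G] (w h ℓ : ℕ) (P : ℕ → ℕ → ℕ)
    (g : ℕ → ℕ → Tile BWG G) : SelfAssembles (system w h ℓ P g) w h P := by
  refine ⟨bigTile ℓ P g, ⟨fun x hx y hy => ?_, fun _ _ => rfl, fun _ _ => rfl,
    fun _ _ _ _ => rfl, fun _ _ _ _ => rfl⟩, fun _ _ _ _ => rfl⟩
  refine Finset.mem_image.2 ⟨(x, y), ?_, rfl⟩
  simp only [Finset.mem_product, Finset.mem_range]
  exact ⟨hx, hy⟩

end Asm

/-! ### The subpattern `p` of `P_F` -/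

theorem patF_eq_pPat (F : CNF3) {x y : ℕ} (hx : 1 ≤ x) (hx' : x < 17) (hy : 1 ≤ y) (hy' : y < 3) :
    patF F x y = pPat (x - 1) (y - 1) := by
  simp only [patF, blocksOf, List.cons_append, place]
  rw [if_pos (by omega)]

theorem patF_or1 (F : CNF3) {i : ℕ} (hi : i < 8) : patF F (2 * i + 2) 1 = PColor.orC := by
  rw [patF_eq_pPat F (by omega) (by omega) (by omega) (by omega), pPat, if_pos rfl,
    if_neg (by omega)]

theorem patF_or2 (F : CNF3) {i : ℕ} (hi : i < 8) : patF F (2 * i + 1) 2 = PColor.orC := by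
  rw [patF_eq_pPat F (by omega) (by omega) (by omega) (by omega), pPat, if_neg (by omega),
    if_pos (by omega)]

theorem patF_Y (F : CNF3) {i : ℕ} (hi : i < 8) :
    patF F (2 * i + 2) 2 = PColor.Y ⟨i, hi⟩ := by
  rw [patF_eq_pPat F (by omega) (by omega) (by omega) (by omega), pPat, if_neg (by omega),
    if_neg (by omega)]
  congr 2
  omega

/-- If the pattern `Q` can be self-assembled by a DTAS `Θ` with at most `m_b = 1`
black, `m_w = 5k − 3(w(P) + h(P)) + 14` white and `m_g = 2k + 3` gray tile types,
then the pattern `P` can be self-assembled by a DTAS `T` with at most `m = k + 3`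
tile types. -/
theorem p_self_assembly_of_q_self_assembly {G₁ : Type} [DecidableEq G₁]
    (k w h : ℕ) (P : ℕ → ℕ → ℕ) (hI : InI k w h P)
    (Θ : RTAS BWG G₁) (hD : DirectedTAS Θ)
    (hb : countColor Θ BWG.black ≤ 1)
    (hwt : countColor Θ BWG.white ≤ 5 * k + 14 - 3 * (w + h))
    (hg : countColor Θ BWG.gray ≤ 2 * k + 3)
    (hSA : SelfAssembles Θ (QW k w) (QH k h) (QPat k w h P)) :
    ∃ (G₂ : Type) (T : RTAS ℕ G₂), DirectedTAS T ∧ T.tiles.card ≤ k + 3 ∧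
      SelfAssembles T w h P := by
  obtain ⟨F, ρ, hwF, rfl, hbij, hP⟩ := hI
  obtain ⟨f, ⟨hmem, -, -, hhor, hver⟩, hcol⟩ := hSA
  have hw : 45 ≤ w := by rw [hwF, widthF]; omega
  have hcolors : ∀ x < w, ∀ y < 6, patF F x y ∈ colorsOf (widthF F) 6 (patF F) := by
    intro x hx y hy
    refine Finset.mem_image.2 ⟨(x, y), ?_, rfl⟩
    rw [Finset.mem_product, Finset.mem_range, Finset.mem_range, ← hwF]
    exact ⟨hx, hy⟩
  have hrng : ∀ x < w, ∀ y < 6, 1 ≤ P x y ∧ P x y ≤ k := by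
    intro x hx y hy
    rw [hP x hx y hy]
    exact hbij.mapsTo (hcolors x hx y hy)
  have hsurj : ∀ c, 1 ≤ c → c ≤ k → ∃ x < w, ∃ y < 6, P x y = c := by
    intro c h1 h2
    obtain ⟨a, ha, rfl⟩ := hbij.surjOn (Set.mem_Icc.2 ⟨h1, h2⟩)
    obtain ⟨⟨x, y⟩, hp, rfl⟩ := Finset.mem_image.1 (Finset.mem_coe.1 ha)
    rw [Finset.mem_product, Finset.mem_range, Finset.mem_range, ← hwF] at hp
    exact ⟨x, hp.1, y, hp.2, hP x hp.1 y hp.2⟩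
  have hcount : ∀ {c : BWG} {n : ℕ}, countColor Θ c ≤ n → ∀ s : Finset (Tile BWG G₁),
      s ⊆ Θ.tiles → (∀ t ∈ s, t.color = c) → s.card ≤ n := fun hn s hs hc =>
    (Finset.card_le_card fun t ht => Finset.mem_filter.2 ⟨hs ht, hc t ht⟩).trans hn
  let g : ℕ → ℕ → Tile BWG G₁ := fun X Y => f (X - 1) (Y - 1)
  have S : Asm k (5 * k + 8) w 6 P Θ.tiles g :=
    { hl := rfl
      hw := by omega
      hh := by omega
      det := by
        intro t ht u hu h1 h2
        by_contra hne
        rcases hD t ht u hu hne with h3 | h3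
        · exact h3 h1
        · exact h3 h2
      blk := fun t ht u hu h1 h2 => Finset.card_le_one.1 hb t
        (Finset.mem_filter.2 ⟨ht, h1⟩) u (Finset.mem_filter.2 ⟨hu, h2⟩)
      gry := hcount hg
      wht := fun s hs hc => by
        have := hcount hwt s hs hc
        omega
      mem := fun X Y h1 h2 h3 h4 => hmem _ (by rw [QW]; omega) _ (by rw [QH]; omega)
      hor := fun X Y h1 h2 h3 h4 => by
        have := hhor (X - 1) (by rw [QW]; omega) (Y - 1) (by rw [QH]; omega)
        rwa [Nat.sub_add_cancel h1] at this
      ver := fun X Y h1 h2 h3 h4 => by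
        have := hver (X - 1) (by rw [QW]; omega) (Y - 1) (by rw [QH]; omega)
        rwa [Nat.sub_add_cancel h3] at this
      col := fun X Y h1 h2 h3 h4 => hcol _ (by rw [QW]; omega) _ (by rw [QH]; omega)
      rng := hrng }
  have hA := S.A_card (ρ PColor.orC) (by omega) (by omega) (hcount hwt) hsurj
    (fun i hi => by rw [hP _ (by omega) _ (by omega), patF_or1 F hi])
    (fun i hi => by rw [hP _ (by omega) _ (by omega), patF_or2 F hi])
    (fun i hi j hj he => by
      rw [hP _ (by omega) _ (by omega), hP _ (by omega) _ (by omega)] at he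
      have := hbij.injOn (hcolors _ (by omega) _ (by omega)) (hcolors _ (by omega) _ (by omega)) he
      rw [patF_Y F hi, patF_Y F hj] at this
      exact congrArg Fin.val (PColor.Y.inj this))
  refine ⟨G₁ ⊕ ℕ, Asm.system w 6 (5 * k + 8) P g, S.system_directed, ?_,
    Asm.system_selfAssembles w 6 _ P g⟩
  have hB := S.bigTile_card
  change Finset.card (Finset.image _ _) ≤ _
  omega
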